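/- arXiv:2203.00342 — 9 statements merged into one kernel-verified Lean document; each statement's English description precedes it below -/
import Mathlib

section
/- Let d ≥ 1, let μ > 0 and L > 0, and let f : ℝ^d → ℝ be a differentiable function in RSI⁻(μ) ∩ EB⁺(L). Define the gradient descent iterates x_{i+1} = x_i − (μ/L²)·∇f(x_i) starting from any x₀ ∈ ℝ^d. Then for every i ≥ 0, ‖x_i − x_i^*‖² ≤ (1 − μ²/L²)^i · ‖x₀ − x₀^*‖², where x_i^* denotes the orthogonal projection of x_i onto the set of global minimizers of f. -/
noncomputable section

open RealInnerProductSpace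

/-- The set of global minimizers of `f`. -/
def argminSet {d : ℕ} (f : EuclideanSpace ℝ (Fin d) → ℝ) :
    Set (EuclideanSpace ℝ (Fin d)) := {z | ∀ y, f z ≤ f y}

/-- `p` is the orthogonal projection map onto the set `X` : for each `x`, `p x` is a
nearest point to `x` in `X`. -/
def IsProjOn {d : ℕ} (p : EuclideanSpace ℝ (Fin d) → EuclideanSpace ℝ (Fin d))
    (X : Set (EuclideanSpace ℝ (Fin d))) : Prop :=
  ∀ x, p x ∈ X ∧ ∀ y ∈ X, ‖x - p x‖ ≤ ‖x - y‖

/-- `f` is a differentiable function, whose set of global minimizers is nonempty, closed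
and convex, belonging to `RSI⁻(μ) ∩ EB⁺(L)`. -/
def MemRSIEB {d : ℕ} (μ L : ℝ) (f : EuclideanSpace ℝ (Fin d) → ℝ) : Prop :=
  Differentiable ℝ f ∧ (argminSet f).Nonempty ∧ IsClosed (argminSet f) ∧
    Convex ℝ (argminSet f) ∧
    ∃ p, IsProjOn p (argminSet f) ∧
      (∀ x, μ * ‖x - p x‖ ^ 2 ≤ ⟪gradient f x, x - p x⟫) ∧
      (∀ x, ‖gradient f x‖ ≤ L * ‖x - p x‖)

/-- Convergence rate of gradient descent with step size `μ/L²` on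
`RSI⁻(μ) ∩ EB⁺(L)`. -/
theorem stmt_0 {d : ℕ} (hd : 1 ≤ d) (μ L : ℝ) (hμ : 0 < μ) (hL : 0 < L)
    (f : EuclideanSpace ℝ (Fin d) → ℝ) (hf : Differentiable ℝ f)
    (hne : (argminSet f).Nonempty) (hcl : IsClosed (argminSet f))
    (hcv : Convex ℝ (argminSet f))
    (p : EuclideanSpace ℝ (Fin d) → EuclideanSpace ℝ (Fin d))
    (hp : IsProjOn p (argminSet f))
    (hRSI : ∀ x, μ * ‖x - p x‖ ^ 2 ≤ ⟪gradient f x, x - p x⟫)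
    (hEB : ∀ x, ‖gradient f x‖ ≤ L * ‖x - p x‖)
    (x₀ : EuclideanSpace ℝ (Fin d)) (x : ℕ → EuclideanSpace ℝ (Fin d))
    (hx0 : x 0 = x₀)
    (hx : ∀ i, x (i + 1) = x i - (μ / L ^ 2) • gradient f (x i)) :
    ∀ i, ‖x i - p (x i)‖ ^ 2 ≤ (1 - μ ^ 2 / L ^ 2) ^ i * ‖x 0 - p (x 0)‖ ^ 2 := by
  have hstep : ∀ i, ‖x (i+1) - p (x (i+1))‖ ^ 2 ≤ (1 - μ ^ 2 / L ^ 2) * ‖x i - p (x i)‖ ^ 2 := by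
    intro i
    have h1 := (hp (x (i+1))).2 (p (x i)) (hp (x i)).1
    have h2 : ‖x (i+1) - p (x (i+1))‖ ^ 2 ≤ ‖x (i+1) - p (x i)‖ ^ 2 := by gcongr
    have h3 : x (i+1) - p (x i) = (x i - p (x i)) - (μ / L ^ 2) • gradient f (x i) := by
      rw [hx]; abel
    rw [h3, norm_sub_sq_real (x i - p (x i)), inner_smul_right, norm_smul, real_inner_comm] at h2
    have h4 := hRSI (x i)
    have h5 : ‖gradient f (x i)‖ ^ 2 ≤ (L * ‖x i - p (x i)‖) ^ 2 := by
      gcongr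
      exact hEB (x i)
    have ht : 0 < μ / L ^ 2 := by positivity
    rw [Real.norm_of_nonneg ht.le] at h2
    have h6 := mul_le_mul_of_nonneg_left h4 ht.le
    have h7 := mul_le_mul_of_nonneg_left h5 (sq_nonneg (μ / L ^ 2))
    have h8 : (μ / L ^ 2) ^ 2 * (L * ‖x i - p (x i)‖) ^ 2
        = μ ^ 2 / L ^ 2 * ‖x i - p (x i)‖ ^ 2 := by
      field_simp
    have h9 : μ / L ^ 2 * (μ * ‖x i - p (x i)‖ ^ 2)
        = μ ^ 2 / L ^ 2 * ‖x i - p (x i)‖ ^ 2 := by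
      field_simp
    rw [h8] at h7
    rw [h9] at h6
    nlinarith
  rcases le_or_gt 0 (1 - μ ^ 2 / L ^ 2) with hc | hc
  · intro i
    induction i with
    | zero => simp
    | succ k ih =>
      calc _ ≤ _ := hstep k
        _ ≤ _ := mul_le_mul_of_nonneg_left ih hc
        _ = _ := by ring
  · have hz : ∀ i, ‖x i - p (x i)‖ ^ 2 = 0 := by
      intro i
      have h1 := hstep i
      have h2 := sq_nonneg ‖x (i+1) - p (x (i+1))‖
      have h3 := sq_nonneg ‖x i - p (x i)‖
      nlinarith
    intro i
    rw [hz i, hz 0, mul_zero]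
end
end

section
/- Let d ≥ 1, let μ > 0 and L > 0, and let f : ℝ^d → ℝ be a differentiable function in RSI⁻(μ) ∩ EB⁺(L). Starting from any x₀ ∈ ℝ^d, define x₁ = x₀ − (1/(2μ))·∇f(x₀) and x_{i+1} = x_i − (μ/L²)·∇f(x_i) for i ≥ 1. Then for every i ≥ 1, ‖x_i − x_i^*‖² ≤ (‖∇f(x₀)‖²/(4μ²)) · (1 − μ²/L²)^{i−1}, where x_i^* denotes the orthogonal projection of x_i onto the set of global minimizers of f. -/
noncomputable section

open RealInnerProductSpace

/-- Convergence rate of gradient descent with first step size `1/(2μ)`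
and step size `μ/L²` afterwards, on `RSI⁻(μ) ∩ EB⁺(L)`. -/
theorem stmt_1 {d : ℕ} (hd : 1 ≤ d) (μ L : ℝ) (hμ : 0 < μ) (hL : 0 < L)
    (f : EuclideanSpace ℝ (Fin d) → ℝ) (hf : Differentiable ℝ f)
    (hne : (argminSet f).Nonempty) (hcl : IsClosed (argminSet f))
    (hcv : Convex ℝ (argminSet f))
    (p : EuclideanSpace ℝ (Fin d) → EuclideanSpace ℝ (Fin d))
    (hp : IsProjOn p (argminSet f))
    (hRSI : ∀ x, μ * ‖x - p x‖ ^ 2 ≤ ⟪gradient f x, x - p x⟫)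
    (hEB : ∀ x, ‖gradient f x‖ ≤ L * ‖x - p x‖)
    (x₀ : EuclideanSpace ℝ (Fin d)) (x : ℕ → EuclideanSpace ℝ (Fin d))
    (hx0 : x 0 = x₀)
    (hx1 : x 1 = x 0 - (1 / (2 * μ)) • gradient f (x 0))
    (hx : ∀ i, 1 ≤ i → x (i + 1) = x i - (μ / L ^ 2) • gradient f (x i)) :
    ∀ i, 1 ≤ i →
      ‖x i - p (x i)‖ ^ 2 ≤
        ‖gradient f (x 0)‖ ^ 2 / (4 * μ ^ 2) * (1 - μ ^ 2 / L ^ 2) ^ (i - 1) := by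
  have key : ∀ (a : ℝ) (y z : EuclideanSpace ℝ (Fin d)), 0 ≤ a → z = y - a • gradient f y →
      ‖z - p z‖ ^ 2 ≤ ‖y - p y‖ ^ 2 - 2 * a * (μ * ‖y - p y‖ ^ 2)
        + a ^ 2 * ‖gradient f y‖ ^ 2 := by
    intro a y z ha hz
    have h1 : ‖z - p z‖ ^ 2 ≤ ‖z - p y‖ ^ 2 :=
      pow_le_pow_left₀ (norm_nonneg _) ((hp z).2 _ (hp y).1) 2
    have h2 : z - p y = (y - p y) - a • gradient f y := by rw [hz]; abel
    have h3 : ‖z - p y‖ ^ 2 = ‖y - p y‖ ^ 2 - 2 * (a * ⟪gradient f y, y - p y⟫)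
        + a ^ 2 * ‖gradient f y‖ ^ 2 := by
      rw [h2, norm_sub_sq_real, real_inner_smul_right, real_inner_comm, norm_smul, mul_pow,
        Real.norm_eq_abs, sq_abs]
    have h4 := mul_le_mul_of_nonneg_left (hRSI y) ha
    linarith
  have hin : ∀ y, μ * ‖y - p y‖ ^ 2 ≤ L * ‖y - p y‖ ^ 2 := by
    intro y
    have h1 := hRSI y
    have h2 := real_inner_le_norm (gradient f y) (y - p y)
    have h3 := mul_le_mul_of_nonneg_right (hEB y) (norm_nonneg (y - p y))
    nlinarith
  by_cases hLμ : L < μ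
  · have hr : ∀ y, ‖y - p y‖ = 0 := by
      intro y
      have h1 := hin y
      have h2 : ‖y - p y‖ ^ 2 = 0 := by
        have := sq_nonneg ‖y - p y‖
        nlinarith
      exact pow_eq_zero_iff (two_ne_zero) |>.1 h2
    have hg : ‖gradient f (x 0)‖ = 0 := by
      have h1 := hEB (x 0)
      rw [hr, mul_zero] at h1
      exact le_antisymm h1 (norm_nonneg _)
    intro i _
    rw [hr, hg]
    simp
  · have hc : 0 ≤ 1 - μ ^ 2 / L ^ 2 := by
      rw [sub_nonneg, div_le_one (by positivity)]
      exact pow_le_pow_left₀ hμ.le (not_lt.1 hLμ) 2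
    intro i hi
    induction i, hi using Nat.le_induction with
    | base =>
      have h := key _ _ _ (by positivity) hx1
      refine h.trans (le_of_eq ?_)
      simp only [Nat.sub_self, pow_zero, mul_one]
      field_simp
      ring
    | succ n hn ih =>
      have h := key _ _ _ (by positivity) (hx n hn)
      have h5 : ‖gradient f (x n)‖ ^ 2 ≤ L ^ 2 * ‖x n - p (x n)‖ ^ 2 := by
        rw [← mul_pow]
        exact pow_le_pow_left₀ (norm_nonneg _) (hEB _) 2
      have h6 := mul_le_mul_of_nonneg_left h5 (sq_nonneg (μ / L ^ 2))
      have h7 : (μ / L ^ 2) ^ 2 * (L ^ 2 * ‖x n - p (x n)‖ ^ 2)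
          = μ ^ 2 / L ^ 2 * ‖x n - p (x n)‖ ^ 2 := by
        field_simp
      have h8 : 2 * (μ / L ^ 2) * (μ * ‖x n - p (x n)‖ ^ 2)
          = 2 * (μ ^ 2 / L ^ 2 * ‖x n - p (x n)‖ ^ 2) := by
        ring
      have h9 := mul_le_mul_of_nonneg_right ih hc
      have h10 : n + 1 - 1 = (n - 1) + 1 := by omega
      rw [h10, pow_succ _ (n - 1), ← mul_assoc]
      linarith
end
end

section
/- Let d ≥ 1, let μ > 0 and L > 0, and let f : ℝ^d → ℝ be a differentiable function in RSI⁻(μ) ∩ EB⁺(L). For any x ∈ ℝ^d, let y = x − (μ/L²)·∇f(x). Then ‖y − y^*‖² ≤ (1 − μ²/L²)·‖x − x^*‖², where x^* and y^* denote the orthogonal projections of x and y onto the set of global minimizers of f. -/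
noncomputable section

open RealInnerProductSpace

/-- One step of gradient descent with step size `μ/L²` contracts the
distance to the minimizer set on `RSI⁻(μ) ∩ EB⁺(L)`. -/
theorem stmt_2 {d : ℕ} (hd : 1 ≤ d) (μ L : ℝ) (hμ : 0 < μ) (hL : 0 < L)
    (f : EuclideanSpace ℝ (Fin d) → ℝ) (hf : Differentiable ℝ f)
    (hne : (argminSet f).Nonempty) (hcl : IsClosed (argminSet f))
    (hcv : Convex ℝ (argminSet f))
    (p : EuclideanSpace ℝ (Fin d) → EuclideanSpace ℝ (Fin d))
    (hp : IsProjOn p (argminSet f))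
    (hRSI : ∀ x, μ * ‖x - p x‖ ^ 2 ≤ ⟪gradient f x, x - p x⟫)
    (hEB : ∀ x, ‖gradient f x‖ ≤ L * ‖x - p x‖)
    (x y : EuclideanSpace ℝ (Fin d))
    (hy : y = x - (μ / L ^ 2) • gradient f x) :
    ‖y - p y‖ ^ 2 ≤ (1 - μ ^ 2 / L ^ 2) * ‖x - p x‖ ^ 2 := by
  have h1 : ‖y - p y‖ ^ 2 ≤ ‖y - p x‖ ^ 2 :=
    pow_le_pow_left₀ (norm_nonneg _) ((hp y).2 (p x) (hp x).1) 2
  refine h1.trans ?_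
  have h2 : y - p x = (x - p x) - (μ / L ^ 2) • gradient f x := by
    rw [hy]; abel
  have h3 := hRSI x
  have h4 : ‖gradient f x‖ ^ 2 ≤ (L * ‖x - p x‖) ^ 2 :=
    pow_le_pow_left₀ (norm_nonneg _) (hEB x) 2
  have ht : 0 < μ / L ^ 2 := by positivity
  rw [h2, norm_sub_sq_real, inner_smul_right, norm_smul, mul_pow, Real.norm_eq_abs, sq_abs,
    real_inner_comm]
  have h5 := mul_le_mul_of_nonneg_left h3 ht.le
  have h6 := mul_le_mul_of_nonneg_left h4 (sq_nonneg (μ / L ^ 2))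
  have e1 : μ / L ^ 2 * (μ * ‖x - p x‖ ^ 2) = μ ^ 2 / L ^ 2 * ‖x - p x‖ ^ 2 := by ring
  have e2 : (μ / L ^ 2) ^ 2 * (L * ‖x - p x‖) ^ 2 = μ ^ 2 / L ^ 2 * ‖x - p x‖ ^ 2 := by
    field_simp
  rw [e1] at h5
  rw [e2] at h6
  linarith
end
end

section
/- Let d ≥ 1, let μ > 0, and let f : ℝ^d → ℝ be a differentiable function in RSI⁻(μ). For any x ∈ ℝ^d, let y = x − (1/(2μ))·∇f(x). Then ‖y − y^*‖² ≤ ‖∇f(x)‖²/(4μ²), where y^* denotes the orthogonal projection of y onto the set of global minimizers of f. -/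
noncomputable section

open RealInnerProductSpace

/-- One step of gradient descent with step size `1/(2μ)` on a function
satisfying `RSI⁻(μ)` lands within distance `‖∇f(x)‖/(2μ)` of the minimizer set. -/
theorem stmt_3 {d : ℕ} (hd : 1 ≤ d) (μ : ℝ) (hμ : 0 < μ)
    (f : EuclideanSpace ℝ (Fin d) → ℝ) (hf : Differentiable ℝ f)
    (hne : (argminSet f).Nonempty) (hcl : IsClosed (argminSet f))
    (hcv : Convex ℝ (argminSet f))
    (p : EuclideanSpace ℝ (Fin d) → EuclideanSpace ℝ (Fin d))
    (hp : IsProjOn p (argminSet f))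
    (hRSI : ∀ x, μ * ‖x - p x‖ ^ 2 ≤ ⟪gradient f x, x - p x⟫)
    (x y : EuclideanSpace ℝ (Fin d))
    (hy : y = x - (1 / (2 * μ)) • gradient f x) :
    ‖y - p y‖ ^ 2 ≤ ‖gradient f x‖ ^ 2 / (4 * μ ^ 2) := by
  have h1 : ‖y - p y‖ ≤ ‖y - p x‖ := (hp y).2 _ (hp x).1
  have h2 : ‖y - p y‖ ^ 2 ≤ ‖y - p x‖ ^ 2 := by gcongr
  have h3 : y - p x = (x - p x) - (1 / (2 * μ)) • gradient f x := by
    rw [hy]; abel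
  have h4 : ‖y - p x‖ ^ 2 = ‖x - p x‖ ^ 2 - (1 / μ) * ⟪gradient f x, x - p x⟫
      + ‖gradient f x‖ ^ 2 / (4 * μ ^ 2) := by
    rw [h3, norm_sub_sq_real, real_inner_smul_right, norm_smul, mul_pow, Real.norm_eq_abs,
      sq_abs, real_inner_comm]
    field_simp
    ring
  have h5 : ‖x - p x‖ ^ 2 ≤ (1 / μ) * ⟪gradient f x, x - p x⟫ := by
    rw [one_div, inv_mul_eq_div, le_div_iff₀ hμ, mul_comm]
    exact hRSI x
  linarith
end
end

section
/- Let d ≥ 1, let μ > 0, and let f : ℝ^d → ℝ be a differentiable function in RSI⁻(μ). Then for every x ∈ ℝ^d, f(x) − f(x^*) ≥ (μ/2)·‖x − x^*‖², where x^* denotes the orthogonal projection of x onto the set of global minimizers of f (so f(x^*) is the global minimum value of f). -/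
noncomputable section

open RealInnerProductSpace

/-- A function satisfying `RSI⁻(μ)` grows at least quadratically with
the distance to its minimizer set. -/
theorem stmt_4 {d : ℕ} (hd : 1 ≤ d) (μ : ℝ) (hμ : 0 < μ)
    (f : EuclideanSpace ℝ (Fin d) → ℝ) (hf : Differentiable ℝ f)
    (hne : (argminSet f).Nonempty) (hcl : IsClosed (argminSet f))
    (hcv : Convex ℝ (argminSet f))
    (p : EuclideanSpace ℝ (Fin d) → EuclideanSpace ℝ (Fin d))
    (hp : IsProjOn p (argminSet f))
    (hRSI : ∀ x, μ * ‖x - p x‖ ^ 2 ≤ ⟪gradient f x, x - p x⟫) :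
    ∀ x, μ / 2 * ‖x - p x‖ ^ 2 ≤ f x - f (p x) := by
  intro x
  obtain ⟨hq, hmin⟩ := hp x
  generalize p x = q at hq hmin ⊢
  have hinf : ‖x - q‖ = ⨅ w : argminSet f, ‖x - w‖ := by
    have : Nonempty (argminSet f) := ⟨⟨q, hq⟩⟩
    apply le_antisymm
    · exact le_ciInf fun w => hmin w w.2
    · exact ciInf_le (f := fun w : argminSet f => ‖x - w‖)
        ⟨0, by rintro _ ⟨w, rfl⟩; exact norm_nonneg _⟩ ⟨q, hq⟩
  have hin := (norm_eq_iInf_iff_real_inner_le_zero hcv hq).1 hinf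
  obtain ⟨v, hv⟩ : ∃ v, v = x - q := ⟨_, rfl⟩
  rw [← hv] at hin ⊢
  have hx : x = q + (1 : ℝ) • v := by rw [hv]; simp
  have hproj : ∀ t : ℝ, 0 ≤ t → p (q + t • v) = q := by
    intro t ht
    obtain ⟨hr, hle⟩ := hp (q + t • v)
    have h1 := hle q hq
    generalize p (q + t • v) = r at *
    have h2 := hin r hr
    have e1 : q + t • v - r = t • v - (r - q) := by abel
    have e2 : q + t • v - q = t • v := by abel
    rw [e1, e2] at h1
    have h3 : ‖t • v - (r - q)‖ ^ 2 ≤ ‖t • v‖ ^ 2 := by gcongr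
    rw [norm_sub_sq_real, real_inner_smul_left] at h3
    have h4 : t * ⟪v, r - q⟫ ≤ 0 := mul_nonpos_of_nonneg_of_nonpos ht h2
    have h5 : ‖r - q‖ ^ 2 = 0 := le_antisymm (by linarith) (by positivity)
    have h6 : ‖r - q‖ = 0 := by simpa using h5
    exact sub_eq_zero.1 (norm_eq_zero.1 h6)
  have hder : ∀ t : ℝ, HasDerivAt (fun t : ℝ => f (q + t • v) - μ / 2 * t ^ 2 * ‖v‖ ^ 2)
      (⟪gradient f (q + t • v), v⟫ - μ * t * ‖v‖ ^ 2) t := by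
    intro t
    have hg := (hf (q + t • v)).hasGradientAt.hasFDerivAt
    have hl : HasDerivAt (fun t : ℝ => q + t • v) v t := by
      simpa using ((hasDerivAt_id t).smul_const v).const_add q
    have h1 : HasDerivAt (fun t : ℝ => f (q + t • v)) ⟪gradient f (q + t • v), v⟫ t := by
      have h0 := hg.comp_hasDerivAt t hl
      rw [InnerProductSpace.toDual_apply_apply] at h0
      exact h0
    have h2 : HasDerivAt (fun t : ℝ => μ / 2 * t ^ 2 * ‖v‖ ^ 2) (μ * t * ‖v‖ ^ 2) t := by
      have := ((hasDerivAt_pow 2 t).const_mul (μ / 2)).mul_const (‖v‖ ^ 2)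
      have e : μ / 2 * (((2 : ℕ) : ℝ) * t ^ (2 - 1)) * ‖v‖ ^ 2 = μ * t * ‖v‖ ^ 2 := by
        push_cast
        ring
      rw [e] at this
      exact this
    exact h1.sub h2
  have hmono : MonotoneOn (fun t : ℝ => f (q + t • v) - μ / 2 * t ^ 2 * ‖v‖ ^ 2)
      (Set.Icc 0 1) := by
    apply monotoneOn_of_deriv_nonneg (convex_Icc 0 1)
    · exact fun t _ => (hder t).continuousAt.continuousWithinAt
    · exact fun t _ => (hder t).differentiableAt.differentiableWithinAt
    · intro t ht
      rw [interior_Icc] at ht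
      rw [(hder t).deriv]
      have h := hRSI (q + t • v)
      rw [hproj t ht.1.le, add_sub_cancel_left, norm_smul, real_inner_smul_right,
        Real.norm_of_nonneg ht.1.le] at h
      have h' : t * (μ * t * ‖v‖ ^ 2) ≤ t * ⟪gradient f (q + t • v), v⟫ := by
        calc _ = μ * (t * ‖v‖) ^ 2 := by ring
          _ ≤ _ := h
      have := le_of_mul_le_mul_left h' ht.1
      linarith
  have h := hmono (by simp : (0 : ℝ) ∈ Set.Icc (0 : ℝ) 1) (by simp : (1 : ℝ) ∈ Set.Icc (0 : ℝ) 1)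
    zero_le_one
  simp only [zero_smul, add_zero] at h
  rw [← hx] at h
  linarith
end
end

section
/- Interpolation conditions: let d ≥ 1, n ≥ 0, and let (x_i, g_i) for i = 0, …, n be pairs in ℝ^d × ℝ^d with the points x_i pairwise distinct. Then for all μ > 0 and L > 0, the following are equivalent: (a) there exists a differentiable function f : ℝ^d → ℝ in RSI⁻(μ) ∩ EB⁺(L) such that ∇f(x_i) = g_i for all i; (b) there exists a nonempty closed convex set X* ⊆ ℝ^d such that for all i, ‖g_i‖ ≤ L‖x_i − x_i^*‖ and ⟨g_i, x_i − x_i^*⟩ ≥ μ‖x_i − x_i^*‖², where x_i^* is the orthogonal projection of x_i onto X*. -/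
noncomputable section

open RealInnerProductSpace

open RealInnerProductSpace Filter Topology

lemma hasDerivAt_posSq (t : ℝ) : HasDerivAt (fun t : ℝ => (max t 0) ^ 2) (2 * max t 0) t := by
  rw [hasDerivAt_iff_isLittleO]
  refine Asymptotics.IsBigO.trans_isLittleO (g := fun s : ℝ => (s - t) ^ 2) ?_ ?_
  · refine Asymptotics.IsBigO.of_bound 1 (Eventually.of_forall fun s => ?_)
    simp only [Real.norm_eq_abs, smul_eq_mul, one_mul]
    rw [abs_of_nonneg (sq_nonneg (s - t)), abs_le]
    rcases le_total s 0 with hs | hs <;> rcases le_total t 0 with ht | ht <;>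
      simp only [max_eq_left, max_eq_right, hs, ht] <;> constructor <;>
      nlinarith [sq_nonneg s, sq_nonneg t, sq_nonneg (s - t), mul_nonneg (sub_nonneg.2 hs) (sub_nonneg.2 ht)]
  · have h1 : Tendsto (fun s : ℝ => s - t) (𝓝 t) (𝓝 0) := by
      have : Tendsto (fun s : ℝ => s - t) (𝓝 t) (𝓝 (t - t)) := (continuous_id.sub continuous_const).tendsto t
      simpa using this
    simpa [Function.comp_def] using (Asymptotics.isLittleO_pow_id (𝕜 := ℝ) (n := 2) (by norm_num)).comp_tendsto h1

section
variable {d : ℕ}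

lemma bump (α δ : ℝ) (hα : 0 < α) (hα2 : α ≤ 1 / 2) (hδ : 0 < δ) (a v : EuclideanSpace ℝ (Fin d)) :
    ∃ (H : EuclideanSpace ℝ (Fin d) → ℝ) (G : EuclideanSpace ℝ (Fin d) → EuclideanSpace ℝ (Fin d)), (∀ x, HasGradientAt H (G x) x) ∧ G a = v ∧
      (∀ x, δ ≤ ‖x - a‖ → H x = 0 ∧ G x = 0) ∧
      (∀ x, ‖x - a‖ < δ → |H x| ≤ ‖v‖ * δ ∧ ∃ φ : ℝ, 0 ≤ φ ∧ φ ≤ 1 ∧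
        ‖x - a‖ ≤ δ * (1 - φ) ∧ ‖G x - φ • v‖ ≤ 4 * α * ‖v‖ * (1 - φ)) := by
  classical
  let T : EuclideanSpace ℝ (Fin d) → ℝ := fun x => ‖x - a‖ ^ 2 / δ ^ 2
  let φ : EuclideanSpace ℝ (Fin d) → ℝ := fun x => (max (1 - T x ^ α) 0) ^ 2
  let φ' : EuclideanSpace ℝ (Fin d) → ℝ := fun x => 2 * max (1 - T x ^ α) 0 * (- (α * T x ^ (α - 1)))
  let G : EuclideanSpace ℝ (Fin d) → EuclideanSpace ℝ (Fin d) := fun x => if x = a then v else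
    φ x • v + (⟪v, x - a⟫ * φ' x * (2 / δ ^ 2)) • (x - a)
  have hT0 : ∀ x, 0 ≤ T x := fun x => by positivity
  have hTpos : ∀ x, x ≠ a → 0 < T x := fun x hx => by
    have : 0 < ‖x - a‖ := norm_pos_iff.2 (sub_ne_zero.2 hx)
    positivity
  have hs0 : ∀ x, 0 ≤ T x ^ α := fun x => Real.rpow_nonneg (hT0 x) _
  have hφ0 : ∀ x, 0 ≤ φ x := fun x => sq_nonneg _
  have hφ1 : ∀ x, φ x ≤ 1 := fun x => by
    have h1 : max (1 - T x ^ α) 0 ≤ 1 := max_le (by linarith [hs0 x]) (by norm_num)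
    have h2 : 0 ≤ max (1 - T x ^ α) 0 := le_max_right _ _
    show (max (1 - T x ^ α) 0) ^ 2 ≤ 1
    nlinarith
  have hfar : ∀ x, δ ≤ ‖x - a‖ → max (1 - T x ^ α) 0 = 0 := fun x hx => by
    have : 1 ≤ T x := by
      show 1 ≤ ‖x - a‖ ^ 2 / δ ^ 2
      rw [le_div_iff₀ (by positivity)]
      nlinarith
    have := Real.one_le_rpow this hα.le
    exact max_eq_right (by linarith)
  have hφa : φ a = 1 := by simp [φ, T, Real.zero_rpow hα.ne']
  have hTcont : Continuous T := by fun_prop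
  have hφcont : Continuous φ := by
    have : Continuous fun x => T x ^ α := hTcont.rpow_const (fun _ => Or.inr hα.le)
    fun_prop
  refine ⟨fun x => ⟪v, x - a⟫ * φ x, G, ?_, by simp [G], ?_, ?_⟩
  · intro x
    by_cases hx : x = a
    · subst hx
      rw [hasGradientAt_iff_isLittleO]
      simp only [G, if_true, sub_self, inner_zero_right, zero_mul, sub_zero]
      have h1 : (fun x' : EuclideanSpace ℝ (Fin d) => ⟪v, x' - x⟫) =O[𝓝 x] fun x' => x' - x := by
        refine Asymptotics.IsBigO.of_bound ‖v‖ (Eventually.of_forall fun s => ?_)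
        exact norm_inner_le_norm _ _
      have h2 : (fun x' : EuclideanSpace ℝ (Fin d) => φ x' - 1) =o[𝓝 x] fun _ => (1 : ℝ) := by
        rw [Asymptotics.isLittleO_one_iff]
        have : Tendsto (fun x' => φ x' - 1) (𝓝 x) (𝓝 (φ x - 1)) :=
          (hφcont.sub continuous_const).tendsto x
        simpa [hφa] using this
      have h3 := (h1.norm_right).mul_isLittleO h2
      simp only [mul_one] at h3
      refine (h3.of_norm_right.congr_left fun y => ?_)
      ring
    · have hTd : HasFDerivAt T ((1 / δ ^ 2) • (2 • (innerSL ℝ (x - a)))) x := by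
        have h := ((hasFDerivAt_id x).sub_const a).norm_sq
        have h' := h.mul_const (1 / δ ^ 2)
        refine (h'.congr_fderiv ?_).congr_of_eventuallyEq ?_
        · ext y; simp
        · exact Eventually.of_forall fun y => by simp [T, div_eq_mul_inv]
      have hsd : HasDerivAt (fun t : ℝ => 1 - t ^ α) (-(α * T x ^ (α - 1))) (T x) :=
        (Real.hasDerivAt_rpow_const (Or.inl (hTpos x hx).ne')).const_sub 1
      have hd : HasDerivAt (fun t : ℝ => (max (1 - t ^ α) 0) ^ 2) (φ' x) (T x) :=
        HasDerivAt.comp (h₂ := fun t : ℝ => (max t 0) ^ 2) (T x) (hasDerivAt_posSq (1 - T x ^ α)) hsd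
      have hφd : HasFDerivAt φ (φ' x • ((1 / δ ^ 2) • (2 • (innerSL ℝ (x - a))))) x :=
        hd.comp_hasFDerivAt x hTd
      have hin : HasFDerivAt (fun x : EuclideanSpace ℝ (Fin d) => ⟪v, x - a⟫) (innerSL ℝ v) x := by
        exact (innerSL ℝ v).hasFDerivAt.comp x ((hasFDerivAt_id x).sub_const a)
      rw [hasGradientAt_iff_hasFDerivAt]
      refine (hin.mul hφd).congr_fderiv ?_
      ext y
      simp [G, hx, inner_add_left, inner_smul_left]
      ring
  · intro x hx
    have h := hfar x hx
    have hxa : x ≠ a := by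
      rintro rfl
      simp at hx; linarith
    simp [G, φ, φ', h, hxa]
  · intro x hx
    have hin := abs_real_inner_le_norm v (x - a)
    have hsle : T x ^ α ≤ 1 - φ x ∧ T x ^ α ≤ 1 := by
      have hT1 : T x ≤ 1 := by
        show ‖x - a‖ ^ 2 / δ ^ 2 ≤ 1
        rw [div_le_one (by positivity)]
        have := norm_nonneg (x - a)
        nlinarith
      have h1 : T x ^ α ≤ 1 := Real.rpow_le_one (hT0 x) hT1 hα.le
      have h2 : φ x = (1 - T x ^ α) ^ 2 := by
        simp only [φ]; rw [max_eq_left (by linarith)]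
      refine ⟨?_, h1⟩
      rw [h2]; nlinarith [hs0 x]
    have hyle : ‖x - a‖ ≤ δ * T x ^ α := by
      have hT1 : T x ≤ 1 := by
        show ‖x - a‖ ^ 2 / δ ^ 2 ≤ 1
        rw [div_le_one (by positivity)]
        have := norm_nonneg (x - a)
        nlinarith
      have h1 : T x ^ (1 / 2 : ℝ) ≤ T x ^ α := by
        rcases (hT0 x).eq_or_lt with h | h
        · rw [← h, Real.zero_rpow hα.ne', Real.zero_rpow (by norm_num)]
        · exact Real.rpow_le_rpow_of_exponent_ge h hT1 hα2
      have h2 : T x ^ (1 / 2 : ℝ) = ‖x - a‖ / δ := by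
        rw [← Real.sqrt_eq_rpow]
        simp only [T]
        rw [← div_pow, Real.sqrt_sq (by positivity)]
      rw [h2, div_le_iff₀ hδ] at h1
      linarith
    refine ⟨?_, φ x, hφ0 x, hφ1 x, ?_, ?_⟩
    · rw [abs_mul, abs_of_nonneg (hφ0 x)]
      calc |⟪v, x - a⟫| * φ x ≤ (‖v‖ * ‖x - a‖) * 1 := by
            gcongr
            exact hφ1 x
        _ ≤ ‖v‖ * δ := by rw [mul_one]; gcongr
    · nlinarith [hsle.1]
    · by_cases hxa : x = a
      · subst hxa
        simp [G, hφa]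
      · have hG : G x - φ x • v = (⟪v, x - a⟫ * φ' x * (2 / δ ^ 2)) • (x - a) := by
          simp [G, hxa]
        rw [hG, norm_smul, Real.norm_eq_abs, abs_mul, abs_mul, abs_of_pos (show 0 < 2 / δ ^ 2 by positivity)]
        have hφ' : |φ' x| * T x ≤ 2 * α * (1 - φ x) := by
          have h0 := hTpos x hxa
          have h1 : T x ^ (α - 1) * T x = T x ^ α := by
            rw [← Real.rpow_add_one h0.ne']; simp
          have h2 : |φ' x| = 2 * max (1 - T x ^ α) 0 * (α * T x ^ (α - 1)) := by
            simp only [φ', mul_neg, abs_neg]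
            exact abs_of_nonneg (mul_nonneg (mul_nonneg (by norm_num) (le_max_right _ _))
              (mul_nonneg hα.le (Real.rpow_nonneg h0.le _)))
          rw [h2]
          have h3 : max (1 - T x ^ α) 0 ≤ 1 := max_le (by linarith [hs0 x]) (by norm_num)
          calc _ = 2 * α * (max (1 - T x ^ α) 0 * T x ^ α) := by rw [← h1]; ring
            _ ≤ 2 * α * (1 * (1 - φ x)) := by
              gcongr
              exact hsle.1
            _ = _ := by ring
        calc |⟪v, x - a⟫| * |φ' x| * (2 / δ ^ 2) * ‖x - a‖
            ≤ (‖v‖ * ‖x - a‖) * |φ' x| * (2 / δ ^ 2) * ‖x - a‖ := by gcongr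
          _ = 2 * ‖v‖ * (|φ' x| * T x) := by simp only [T]; ring
          _ ≤ 2 * ‖v‖ * (2 * α * (1 - φ x)) := by gcongr
          _ = _ := by ring

lemma proj_inner {p : EuclideanSpace ℝ (Fin d) → EuclideanSpace ℝ (Fin d)} {X : Set (EuclideanSpace ℝ (Fin d))} (hp : IsProjOn p X) (hX : Convex ℝ X) (x w : EuclideanSpace ℝ (Fin d))
    (hw : w ∈ X) : ⟪x - p x, w - p x⟫ ≤ 0 := by
  have hne : Nonempty X := ⟨⟨w, hw⟩⟩
  refine (norm_eq_iInf_iff_real_inner_le_zero hX (hp x).1).1 ?_ w hw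
  refine le_antisymm (le_ciInf fun y => (hp x).2 y y.2) ?_
  exact ciInf_le (f := fun w : X => ‖x - w‖) ⟨0, by rintro _ ⟨y, rfl⟩; exact norm_nonneg _⟩ ⟨p x, (hp x).1⟩

lemma proj_lip {p : EuclideanSpace ℝ (Fin d) → EuclideanSpace ℝ (Fin d)} {X : Set (EuclideanSpace ℝ (Fin d))} (hp : IsProjOn p X) (hX : Convex ℝ X) (x y : EuclideanSpace ℝ (Fin d)) :
    ‖(x - p x) - (y - p y)‖ ≤ ‖x - y‖ := by
  have h1 := proj_inner hp hX x (p y) (hp y).1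
  have h2 := proj_inner hp hX y (p x) (hp x).1
  have h3 : ‖x - y‖ ^ 2 = ‖(x - p x) - (y - p y)‖ ^ 2 + 2 * ⟪(x - p x) - (y - p y), p x - p y⟫
      + ‖p x - p y‖ ^ 2 := by
    rw [← norm_add_sq_real]; congr 2; abel
  have h4 : ⟪(x - p x) - (y - p y), p x - p y⟫ = -⟪x - p x, p y - p x⟫ - ⟪y - p y, p x - p y⟫ := by
    rw [inner_sub_left, ← inner_neg_right, neg_sub]
  refine le_of_sq_le_sq ?_ (norm_nonneg _)
  nlinarith [sq_nonneg ‖p x - p y‖]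

lemma proj_grad {p : EuclideanSpace ℝ (Fin d) → EuclideanSpace ℝ (Fin d)} {X : Set (EuclideanSpace ℝ (Fin d))} (hp : IsProjOn p X) (hX : Convex ℝ X) (c : ℝ) (x : EuclideanSpace ℝ (Fin d)) :
    HasGradientAt (fun x => c / 2 * ‖x - p x‖ ^ 2) (c • (x - p x)) x := by
  rw [hasGradientAt_iff_isLittleO]
  refine Asymptotics.IsBigO.trans_isLittleO (g := fun s : EuclideanSpace ℝ (Fin d) => ‖s - x‖ ^ 2) ?_ ?_
  · refine Asymptotics.IsBigO.of_bound (|c| / 2 * 3) (Eventually.of_forall fun y => ?_)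
    have h1 : ‖y - p y‖ ^ 2 ≤ ‖x - p x‖ ^ 2 + 2 * ⟪x - p x, y - x⟫ + ‖y - x‖ ^ 2 := by
      rw [← norm_add_sq_real]
      have := (hp y).2 (p x) (hp x).1
      rw [show x - p x + (y - x) = y - p x by abel]
      gcongr
    have h2 : ‖x - p x‖ ^ 2 ≤ ‖y - p y‖ ^ 2 + 2 * ⟪y - p y, x - y⟫ + ‖y - x‖ ^ 2 := by
      rw [norm_sub_rev y x, ← norm_add_sq_real]
      have := (hp x).2 (p y) (hp y).1
      rw [show y - p y + (x - y) = x - p y by abel]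
      gcongr
    have h3 : ⟪y - p y, x - y⟫ = - ⟪x - p x, y - x⟫ - ⟪(y - p y) - (x - p x), y - x⟫ := by
      rw [inner_sub_left (y - p y) (x - p x), ← neg_sub y x, inner_neg_right]; ring
    have h4 := abs_real_inner_le_norm ((y - p y) - (x - p x)) (y - x)
    have h5 := proj_lip hp hX y x
    have h6 : ‖(y - p y) - (x - p x)‖ * ‖y - x‖ ≤ ‖y - x‖ ^ 2 := by
      rw [sq]; gcongr
    have h7 := neg_abs_le ⟪(y - p y) - (x - p x), y - x⟫
    rw [inner_smul_left]
    simp only [conj_trivial]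
    rw [show c / 2 * ‖y - p y‖ ^ 2 - c / 2 * ‖x - p x‖ ^ 2 - c * ⟪x - p x, y - x⟫ =
      c / 2 * (‖y - p y‖ ^ 2 - ‖x - p x‖ ^ 2 - 2 * ⟪x - p x, y - x⟫) by ring, norm_mul]
    rw [show ‖c / 2‖ = |c| / 2 by simp [abs_div], mul_assoc]
    gcongr
    rw [Real.norm_eq_abs, Real.norm_eq_abs, abs_of_nonneg (sq_nonneg ‖y - x‖), abs_le]
    have h8 := le_abs_self ⟪(y - p y) - (x - p x), y - x⟫
    have h9 := sq_nonneg ‖y - x‖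
    constructor <;> linarith
  · have h1 : Tendsto (fun s : EuclideanSpace ℝ (Fin d) => s - x) (𝓝 x) (𝓝 0) := by
      have : Tendsto (fun s : EuclideanSpace ℝ (Fin d) => s - x) (𝓝 x) (𝓝 (x - x)) :=
        (continuous_id.sub continuous_const).tendsto x
      simpa using this
    have := (Asymptotics.isLittleO_norm_pow_id (E' := EuclideanSpace ℝ (Fin d)) (n := 2) (by norm_num)).comp_tendsto h1
    exact this

set_option maxHeartbeats 2000000 in
lemma local_est (μ L : ℝ) (hμ : 0 < μ) (hL : 0 < L) (hμL : μ < L) (N m v e g : EuclideanSpace ℝ (Fin d)) (φ δ y α : ℝ)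
    (hα : 32 * L * α = (L - μ) / 2) (hδ0 : 0 < δ) (hδ : 32 * L * δ ≤ (L - μ) / 2 * ‖N‖)
    (hφ0 : 0 ≤ φ) (hφ1 : φ ≤ 1) (hy0 : 0 ≤ y) (hy : y ≤ δ * (1 - φ)) (hm : ‖m - N‖ ≤ y)
    (hv : v = g - ((μ + L) / 2) • N) (he : ‖e‖ ≤ 4 * α * ‖v‖ * (1 - φ))
    (hg1 : ‖g‖ ≤ L * ‖N‖) (hg2 : μ * ‖N‖ ^ 2 ≤ ⟪g, N⟫) :
    ‖((μ + L) / 2) • m + (φ • v + e)‖ ≤ L * ‖m‖ ∧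
    μ * ‖m‖ ^ 2 ≤ ⟪((μ + L) / 2) • m + (φ • v + e), m⟫ ∧ ‖v‖ * δ < (μ + L) / 2 / 2 * ‖m‖ ^ 2 := by
  obtain ⟨c, hc⟩ : ∃ c, c = (μ + L) / 2 := ⟨_, rfl⟩
  obtain ⟨ρ, hρ⟩ : ∃ ρ, ρ = (L - μ) / 2 := ⟨_, rfl⟩
  obtain ⟨D, hD⟩ : ∃ D, D = ‖N‖ := ⟨_, rfl⟩
  obtain ⟨θ, hθ⟩ : ∃ θ, θ = 1 - φ := ⟨_, rfl⟩
  rw [← hc] at hv ⊢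
  rw [← hρ] at hα hδ
  rw [← hD] at hδ hg1 hg2
  rw [← hθ] at hy he
  have hθ0 : 0 ≤ θ := by linarith
  have hcpos : 0 < c := by linarith
  have hcL : c ≤ L := by linarith
  have hρ0 : 0 < ρ := by linarith
  have hDpos : 0 < D := by
    by_contra h
    have : 0 < 32 * L * δ := by positivity
    nlinarith
  have hα0 : 0 < α := by
    by_contra h
    nlinarith
  have hvn : ‖v‖ ≤ 2 * L * D := by
    rw [hv]
    calc _ ≤ ‖g‖ + ‖c • N‖ := norm_sub_le _ _
      _ = ‖g‖ + c * D := by rw [norm_smul, Real.norm_eq_abs, abs_of_pos hcpos, hD]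
      _ ≤ _ := by nlinarith
  have hen : ‖e‖ ≤ θ * (ρ * D / 4) := by
    calc _ ≤ 4 * α * ‖v‖ * θ := he
      _ ≤ 4 * α * (2 * L * D) * θ := by gcongr
      _ = (32 * L * α) * D * θ / 4 := by ring
      _ = _ := by rw [hα]; ring
  have hyL : L * y ≤ θ * (ρ * D / 32) := by nlinarith
  have hyc : c * y ≤ θ * (ρ * D / 32) := by nlinarith
  have hyμ : μ * y ≤ θ * (ρ * D / 32) := by nlinarith
  have hδD : δ ≤ D / 32 := by
    have : 32 * L * δ ≤ L * D := hδ.trans (by gcongr; linarith)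
    nlinarith
  have hθ1 : θ ≤ 1 := by linarith
  have hyD : y ≤ D / 32 := by nlinarith
  have hm1 : ‖m‖ ≤ D + y := by
    have := norm_le_norm_add_norm_sub' m N
    linarith
  have hm2 : D - y ≤ ‖m‖ := by
    have := norm_le_norm_add_norm_sub' N m
    rw [norm_sub_rev] at this
    linarith
  have hm0 := norm_nonneg m
  have hid : c • m + (φ • v + e) = φ • g + (θ * c) • N + c • (m - N) + e := by
    rw [hv, hθ]; module
  refine ⟨?_, ?_, ?_⟩
  · rw [hid]
    calc _ ≤ ‖φ • g‖ + ‖(θ * c) • N‖ + ‖c • (m - N)‖ + ‖e‖ := norm_add₄_le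
      _ = φ * ‖g‖ + θ * c * D + c * ‖m - N‖ + ‖e‖ := by
        rw [norm_smul, norm_smul, norm_smul, Real.norm_eq_abs, Real.norm_eq_abs, Real.norm_eq_abs,
          abs_of_nonneg hφ0, abs_of_nonneg (mul_nonneg hθ0 hcpos.le), abs_of_pos hcpos, hD]
      _ ≤ φ * (L * D) + θ * c * D + c * y + θ * (ρ * D / 4) := by gcongr
      _ ≤ L * (D - y) := by
        have e1 : φ * (L * D) + θ * c * D = L * D - θ * (ρ * D) := by
          have : φ = 1 - θ := by linarith
          rw [this, hc, hρ]; ring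
        have : 0 ≤ θ * (ρ * D) := by positivity
        nlinarith
      _ ≤ _ := by gcongr
  · rw [hid, inner_add_left, inner_add_left, inner_add_left, inner_smul_left, inner_smul_left,
      inner_smul_left]
    simp only [conj_trivial]
    have i1 : ⟪g, m⟫ = ⟪g, N⟫ + ⟪g, m - N⟫ := by rw [inner_sub_right]; ring
    have i2 : ⟪N, m⟫ = D ^ 2 + ⟪N, m - N⟫ := by
      rw [inner_sub_right, real_inner_self_eq_norm_sq, hD]; ring
    have b1 : -(L * D * y) ≤ ⟪g, m - N⟫ := by
      have h := neg_le_of_abs_le (abs_real_inner_le_norm g (m - N))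
      have : ‖g‖ * ‖m - N‖ ≤ L * D * y := by gcongr
      linarith
    have b2 : -(D * y) ≤ ⟪N, m - N⟫ := by
      have h := neg_le_of_abs_le (abs_real_inner_le_norm N (m - N))
      have : ‖N‖ * ‖m - N‖ ≤ D * y := by rw [hD]; gcongr
      linarith
    have b3 : -(y * (2 * D)) ≤ ⟪m - N, m⟫ := by
      have h := neg_le_of_abs_le (abs_real_inner_le_norm (m - N) m)
      have : ‖m - N‖ * ‖m‖ ≤ y * (2 * D) := by gcongr; linarith
      linarith
    have b4 : -(θ * (ρ * D / 4) * (33 / 32 * D)) ≤ ⟪e, m⟫ := by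
      have h := neg_le_of_abs_le (abs_real_inner_le_norm e m)
      have : ‖e‖ * ‖m‖ ≤ θ * (ρ * D / 4) * (33 / 32 * D) := by gcongr; linarith
      linarith
    have b5 : μ * ‖m‖ ^ 2 ≤ μ * D ^ 2 + 3 * D * (μ * y) := by
      have : ‖m‖ ^ 2 ≤ D ^ 2 + 3 * D * y := by nlinarith
      nlinarith
    have c1 : φ * (μ * D ^ 2 - L * D * y) ≤ φ * ⟪g, m⟫ := by
      gcongr; linarith
    have c2 : θ * c * (D ^ 2 - D * y) ≤ θ * c * ⟪N, m⟫ := by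
      gcongr; linarith
    have c3 : c * (-(y * (2 * D))) ≤ c * ⟪m - N, m⟫ := by gcongr
    have e1 : φ * (μ * D ^ 2) + θ * c * D ^ 2 = μ * D ^ 2 + θ * (ρ * D ^ 2) := by
      have : φ = 1 - θ := by linarith
      rw [this, hc, hρ]; ring
    have d1 : φ * (L * D * y) ≤ L * y * D := by
      have : 0 ≤ L * y * D := by positivity
      nlinarith
    have d2 : θ * c * (D * y) ≤ c * y * D := by
      have : 0 ≤ c * y * D := by positivity
      nlinarith
    have f1 := mul_le_mul_of_nonneg_right hyL hDpos.le
    have f2 := mul_le_mul_of_nonneg_right hyc hDpos.le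
    have f3 := mul_le_mul_of_nonneg_right hyμ hDpos.le
    have : 0 ≤ θ * (ρ * D ^ 2) := by positivity
    nlinarith
  · have h1 : ‖v‖ * δ ≤ 2 * L * D * δ := by gcongr
    have h2 : 2 * L * D * δ ≤ ρ * D / 16 * D := by nlinarith
    have h3 : (31 / 32 * D) ^ 2 ≤ ‖m‖ ^ 2 := by gcongr; linarith
    have h4 : ρ < c := by linarith
    have h5 : 0 < D ^ 2 := by positivity
    nlinarith

lemma local_perturb {p : EuclideanSpace ℝ (Fin d) → EuclideanSpace ℝ (Fin d)} {X : Set (EuclideanSpace ℝ (Fin d))} (hp : IsProjOn p X) (hX : Convex ℝ X)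
    (μ L : ℝ) (hμ : 0 < μ) (hL : 0 < L) (hμL : μ ≤ L) (a g : EuclideanSpace ℝ (Fin d))
    (hg1 : ‖g‖ ≤ L * ‖a - p a‖) (hg2 : μ * ‖a - p a‖ ^ 2 ≤ ⟪g, a - p a⟫) :
    ∃ ε > 0, ∀ δ, 0 < δ → δ ≤ ε → ∃ (H : EuclideanSpace ℝ (Fin d) → ℝ) (G : EuclideanSpace ℝ (Fin d) → EuclideanSpace ℝ (Fin d)), (∀ x, HasGradientAt H (G x) x) ∧
      G a = g - ((μ + L) / 2) • (a - p a) ∧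
      (∀ x, δ ≤ ‖x - a‖ → H x = 0 ∧ G x = 0) ∧
      (∀ x, (H x = 0 ∧ G x = 0) ∨
        (‖((μ + L) / 2) • (x - p x) + G x‖ ≤ L * ‖x - p x‖ ∧
        μ * ‖x - p x‖ ^ 2 ≤ ⟪((μ + L) / 2) • (x - p x) + G x, x - p x⟫ ∧
        0 < (μ + L) / 2 / 2 * ‖x - p x‖ ^ 2 + H x ∧ 0 < ‖x - p x‖)) := by
  by_cases hv : g - ((μ + L) / 2) • (a - p a) = 0
  · refine ⟨1, one_pos, fun δ _ _ => ⟨fun _ => 0, fun _ => 0, fun x => ?_, hv.symm, ?_, ?_⟩⟩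
    · exact hasGradientAt_const x 0
    · simp
    · simp
  have hD : 0 < ‖a - p a‖ := by
    rw [norm_pos_iff]
    intro h
    rw [h] at hg1 hv
    apply hv
    simpa using hg1
  have hlt : μ < L := by
    rcases hμL.lt_or_eq with h | h
    · exact h
    · exfalso
      subst h
      apply hv
      rw [show (μ + μ) / 2 = μ by ring, ← norm_eq_zero, ← sq_eq_zero_iff]
      refine le_antisymm ?_ (sq_nonneg _)
      rw [norm_sub_sq_real, inner_smul_right, norm_smul, Real.norm_eq_abs, abs_of_pos hμ]
      have : ‖g‖ ^ 2 ≤ (μ * ‖a - p a‖) ^ 2 := by gcongr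
      nlinarith
  refine ⟨(L - μ) / 2 * ‖a - p a‖ / (32 * L), ?_, ?_⟩
  · have : 0 < L - μ := by linarith
    positivity
  intro δ hδ0 hδ
  rw [le_div_iff₀ (by positivity)] at hδ
  have hαpos : 0 < (L - μ) / 2 / (32 * L) := by
    have : 0 < L - μ := by linarith
    positivity
  obtain ⟨H, G, h1, h2, h3, h4⟩ := bump ((L - μ) / 2 / (32 * L)) δ hαpos
    (by rw [div_le_iff₀ (by positivity)]; linarith) hδ0 a (g - ((μ + L) / 2) • (a - p a))
  refine ⟨H, G, h1, h2, h3, fun x => ?_⟩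
  rcases le_or_gt δ ‖x - a‖ with h | h
  · exact Or.inl (h3 x h)
  right
  obtain ⟨h5, φ, h6, h7, h8, h9⟩ := h4 x h
  have := local_est μ L hμ hL hlt (a - p a) (x - p x) _
    (G x - φ • (g - ((μ + L) / 2) • (a - p a))) g φ δ ‖x - a‖ ((L - μ) / 2 / (32 * L))
    (by field_simp) hδ0 (by linarith) h6 h7 (norm_nonneg _) h8 (proj_lip hp hX x a) rfl h9 hg1 hg2
  rw [add_sub_cancel] at this
  obtain ⟨k1, k2, k3⟩ := this
  refine ⟨k1, k2, ?_, ?_⟩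
  · have := neg_le_of_abs_le h5
    linarith
  · by_contra hcon
    have h0 : ‖x - p x‖ = 0 := le_antisymm (not_lt.1 hcon) (norm_nonneg _)
    rw [h0] at k3
    have := mul_nonneg (norm_nonneg (g - ((μ + L) / 2) • (a - p a))) hδ0.le
    norm_num at k3
    linarith

end

/-- Interpolation conditions for `RSI⁻(μ) ∩ EB⁺(L)` : a family of
points and gradients `(x i, g i)` with pairwise distinct points can be interpolated by a
function of the class iff there is a nonempty closed convex set `X*` such that each pair
satisfies the `RSI⁻(μ)` and `EB⁺(L)` inequalities relative to the projection onto `X*`. -/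
theorem stmt_7 {d : ℕ} (hd : 1 ≤ d) (n : ℕ)
    (x g : Fin (n + 1) → EuclideanSpace ℝ (Fin d))
    (hdist : Function.Injective x) :
    ∀ μ L : ℝ, 0 < μ → 0 < L →
      ((∃ f : EuclideanSpace ℝ (Fin d) → ℝ, MemRSIEB μ L f ∧
          ∀ i, gradient f (x i) = g i) ↔
        (∃ X : Set (EuclideanSpace ℝ (Fin d)), X.Nonempty ∧ IsClosed X ∧ Convex ℝ X ∧
          ∃ p, IsProjOn p X ∧ ∀ i,
            ‖g i‖ ≤ L * ‖x i - p (x i)‖ ∧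
            μ * ‖x i - p (x i)‖ ^ 2 ≤ ⟪g i, x i - p (x i)⟫)) := by
  intro μ L hμ hL
  constructor
  · rintro ⟨f, ⟨_, h1, h2, h3, p, hp, hr, he⟩, hg⟩
    refine ⟨argminSet f, h1, h2, h3, p, hp, fun i => ?_⟩
    rw [← hg i]
    exact ⟨he _, hr _⟩
  rintro ⟨X, hne, hcl, hX, p, hp, hi⟩
  rcases lt_or_ge L μ with hlt | hμL
  · have hg : ∀ i, g i = 0 := by
      intro i
      obtain ⟨h1, h2⟩ := hi i
      have h3 := real_inner_le_norm (g i) (x i - p (x i))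
      have h4 : ‖x i - p (x i)‖ = 0 := by
        by_contra hne
        have h5 : 0 < ‖x i - p (x i)‖ := lt_of_le_of_ne (norm_nonneg _) (Ne.symm hne)
        have h6 : 0 < ‖x i - p (x i)‖ ^ 2 := by positivity
        nlinarith
      rw [h4] at h1
      simpa using h1
    have harg : argminSet (fun _ : EuclideanSpace ℝ (Fin d) => (0 : ℝ)) = Set.univ := by
      ext z; simp [argminSet]
    have hgr : ∀ z, gradient (fun _ : EuclideanSpace ℝ (Fin d) => (0 : ℝ)) z = 0 := fun z =>
      (hasGradientAt_const z (0 : ℝ)).gradient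
    refine ⟨fun _ => 0, ⟨differentiable_const _, ?_, ?_, ?_, id, ?_, ?_, ?_⟩, ?_⟩
    · rw [harg]; exact Set.univ_nonempty
    · rw [harg]; exact isClosed_univ
    · rw [harg]; exact convex_univ
    · rw [harg]; intro z; simp
    · intro z; simp
    · intro z; simp [hgr]
    · intro i; rw [hgr, hg]
  choose ε hε hloc using fun i =>
    local_perturb hp hX μ L hμ hL hμL (x i) (g i) (hi i).1 (hi i).2
  obtain ⟨δ, hδ0, hδε, hδs⟩ : ∃ δ : ℝ, 0 < δ ∧ (∀ i, δ ≤ ε i) ∧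
      ∀ i j, i ≠ j → 2 * δ ≤ ‖x i - x j‖ := by
    have e1 : ∀ᶠ δ : ℝ in 𝓝[>] 0, ∀ i, δ ≤ ε i := by
      rw [eventually_all]
      intro i
      exact nhdsWithin_le_nhds (Iic_mem_nhds (hε i))
    have e2 : ∀ᶠ δ : ℝ in 𝓝[>] 0, ∀ i j, i ≠ j → 2 * δ ≤ ‖x i - x j‖ := by
      rw [eventually_all]
      intro i
      rw [eventually_all]
      intro j
      by_cases hij : i = j
      · simp [hij]
      · have : 0 < ‖x i - x j‖ / 2 := by
          have : 0 < ‖x i - x j‖ := norm_pos_iff.2 (sub_ne_zero.2 (hdist.ne hij))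
          positivity
        have h := nhdsWithin_le_nhds (s := Set.Ioi 0) (Iic_mem_nhds this)
        filter_upwards [h] with δ hδ _
        simp only [Set.mem_Iic] at hδ
        linarith
    obtain ⟨δ, ⟨h1, h2⟩, h3⟩ := ((e1.and e2).and self_mem_nhdsWithin).exists
    exact ⟨δ, h3, h1, h2⟩
  choose H G hgrad hGa hfar hcase using fun i => hloc i δ hδ0 (hδε i)
  have hproj0 : ∀ z ∈ X, ‖z - p z‖ = 0 := fun z hz => by
    have := (hp z).2 z hz
    simp only [sub_self, norm_zero] at this
    exact le_antisymm this (norm_nonneg _)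
  -- at most one perturbation is active
  have huniq : ∀ z, (∀ i, H i z = 0 ∧ G i z = 0) ∨ ∃ i, ¬ (H i z = 0 ∧ G i z = 0) ∧
      ∀ j, j ≠ i → H j z = 0 ∧ G j z = 0 := by
    intro z
    by_cases h : ∀ i, H i z = 0 ∧ G i z = 0
    · exact Or.inl h
    right
    obtain ⟨i, hzi⟩ := not_forall.1 h
    refine ⟨i, hzi, fun j hj => hfar j z ?_⟩
    have h1 : ‖z - x i‖ < δ := by
      by_contra hc
      exact hzi (hfar i z (not_lt.1 hc))
    have h2 := hδs j i hj
    have h3 := norm_sub_le_norm_sub_add_norm_sub (x j) z (x i)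
    rw [norm_sub_rev (x j) z] at h3
    linarith
  set c := (μ + L) / 2 with hc
  have hcpos : 0 < c := by linarith
  let f : EuclideanSpace ℝ (Fin d) → ℝ := fun z => c / 2 * ‖z - p z‖ ^ 2 + ∑ i, H i z
  have hf : ∀ z, HasGradientAt f (c • (z - p z) + ∑ i, G i z) z := by
    intro z
    have h1 := (proj_grad hp hX c z).hasFDerivAt
    have h2 := HasFDerivAt.fun_sum (u := Finset.univ) (fun i _ => (hgrad i z).hasFDerivAt)
    rw [hasGradientAt_iff_hasFDerivAt, map_add, map_sum]
    exact h1.add h2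
  have hall : ∀ z, (‖c • (z - p z) + ∑ i, G i z‖ ≤ L * ‖z - p z‖ ∧
        μ * ‖z - p z‖ ^ 2 ≤ ⟪c • (z - p z) + ∑ i, G i z, z - p z⟫) ∧
        ((‖z - p z‖ = 0 ∧ f z = 0) ∨ (0 < f z ∧ 0 < ‖z - p z‖)) := by
    intro z
    rcases huniq z with h | ⟨i, hzi, h⟩
    · have e1 : ∑ i, H i z = 0 := Finset.sum_eq_zero fun i _ => (h i).1
      have e2 : ∑ i, G i z = 0 := Finset.sum_eq_zero fun i _ => (h i).2
      simp only [f, e1, e2, add_zero]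
      refine ⟨⟨?_, ?_⟩, ?_⟩
      · rw [norm_smul, Real.norm_eq_abs, abs_of_pos hcpos]
        gcongr; linarith
      · rw [inner_smul_left, real_inner_self_eq_norm_sq]
        simp only [conj_trivial]
        gcongr; linarith
      · rcases (norm_nonneg (z - p z)).eq_or_lt with h0 | h0
        · left; rw [← h0]; simp
        · right; exact ⟨by positivity, h0⟩
    · have e1 : ∑ i, H i z = H i z :=
        Finset.sum_eq_single i (fun j _ hj => (h j hj).1) (by simp)
      have e2 : ∑ i, G i z = G i z :=
        Finset.sum_eq_single i (fun j _ hj => (h j hj).2) (by simp)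
      simp only [f, e1, e2]
      rcases hcase i z with h0 | ⟨k1, k2, k3, k4⟩
      · exact absurd h0 hzi
      · exact ⟨⟨k1, k2⟩, Or.inr ⟨k3, k4⟩⟩
  have hf0 : ∀ z, 0 ≤ f z := fun z => by
    rcases (hall z).2 with h | h
    · exact h.2.ge
    · exact h.1.le
  have hfX : ∀ z ∈ X, f z = 0 := fun z hz => by
    rcases (hall z).2 with h | h
    · exact h.2
    · exact absurd (hproj0 z hz) h.2.ne'
  have harg : argminSet f = X := by
    ext z
    constructor
    · intro hz
      obtain ⟨w, hw⟩ := hne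
      have h1 : f z ≤ 0 := (hz w).trans (hfX w hw).le
      rcases (hall z).2 with h | h
      · have := sub_eq_zero.1 (norm_eq_zero.1 h.1)
        rw [this]; exact (hp z).1
      · linarith [h.1]
    · intro hz y
      rw [hfX z hz]; exact hf0 y
  refine ⟨f, ⟨fun z => (hf z).hasFDerivAt.differentiableAt, ?_, ?_, ?_, p, ?_, ?_, ?_⟩, ?_⟩
  · rw [harg]; exact hne
  · rw [harg]; exact hcl
  · rw [harg]; exact hX
  · rw [harg]; exact hp
  · intro z; rw [(hf z).gradient]; exact (hall z).1.2
  · intro z; rw [(hf z).gradient]; exact (hall z).1.1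
  · intro i
    rw [(hf (x i)).gradient]
    have e2 : ∑ j, G j (x i) = G i (x i) := by
      refine Finset.sum_eq_single i (fun j _ hj => (hfar j (x i) ?_).2) (by simp)
      have := hδs i j hj.symm
      linarith
    rw [e2, hGa]; abel
end
end

section
/- Resisting-oracle lemma: let d ≥ 2, μ > 0, L > μ, and α₀ ∈ [μ/L², max(μ/L², 1/(2μ))]. For any first-order algorithm 𝒜 on ℝ^d and any starting point x₀ ∈ ℝ^d, there exist vectors g₀, …, g_{d−2} ∈ ℝ^d with g₀ ≠ 0, reals f₀, …, f_{d−2}, and nested sets S_{d−2} ⊆ S_{d−3} ⊆ … ⊆ S₀ ⊆ ℝ^d such that: (1) for each i ≤ d−2 there is an affine subspace H_i of ℝ^d of dimension d − i − 1 and a point c_i ∈ H_i with S_i = {x ∈ H_i : ‖x − c_i‖ = r_i}, where r_i = √(α₀/μ − α₀²)·‖g₀‖·(1 − μ²/L²)^{i/2}; (2) letting (x_i) be the iterates generated by 𝒜 starting from x₀ reading the values f_j and gradients g_j (i.e. x_{j+1} = 𝒜_j((x_k, f_k, g_k)_{k ≤ j})), for every i ≤ d−2 and every x ∈ S_i there exists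 a differentiable function f ∈ RSI⁻(μ) ∩ EB⁺(L) whose set of global minimizers is exactly {x} and which satisfies ∇f(x_j) = g_j and f(x_j) = f_j for all j ≤ i. -/
noncomputable section

open RealInnerProductSpace

/-- A first-order algorithm on `ℝ^d` : for each `n`, a map from the first `n + 1`
triples (iterate, function value, gradient) to the next iterate. -/
def FirstOrderAlgorithm (d : ℕ) : Type :=
  (n : ℕ) →
    (Fin (n + 1) → EuclideanSpace ℝ (Fin d) × ℝ × EuclideanSpace ℝ (Fin d)) →
    EuclideanSpace ℝ (Fin d)


/-- The radial profile derivative. -/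
lemma hasDerivAt_posPart_sq (u : ℝ) :
    HasDerivAt (fun v : ℝ => (max 0 v) ^ 2) (2 * max 0 u) u := by
  rcases lt_trichotomy u 0 with h | h | h
  · rw [max_eq_left h.le]
    have : (fun v : ℝ => (max 0 v) ^ 2) =ᶠ[nhds u] fun _ => (0 : ℝ) := by
      filter_upwards [Iio_mem_nhds h] with v hv
      rw [max_eq_left (le_of_lt hv)]; simp
    simpa using (hasDerivAt_const u (0 : ℝ)).congr_of_eventuallyEq this
  · subst h
    rw [hasDerivAt_iff_isLittleO_nhds_zero]
    simp only [zero_add, max_self, mul_zero, smul_zero, sub_zero, ne_eq, OfNat.ofNat_ne_zero,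
      not_false_eq_true, zero_pow]
    have h1 : (fun h : ℝ => h ^ 2) =o[nhds 0] fun h : ℝ => h := by
      simpa using (Asymptotics.isLittleO_pow_id (𝕜 := ℝ) (n := 2) (by norm_num))
    refine Asymptotics.IsBigO.trans_isLittleO ?_ h1
    refine Asymptotics.IsBigO.of_bound 1 (Filter.Eventually.of_forall fun v => ?_)
    rw [one_mul, Real.norm_eq_abs, Real.norm_eq_abs, abs_of_nonneg (sq_nonneg _),
      abs_of_nonneg (sq_nonneg _)]
    rcases le_total 0 v with hv | hv
    · rw [max_eq_right hv]
    · rw [max_eq_left hv]; nlinarith [sq_nonneg v]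
  · rw [max_eq_right h.le]
    have : (fun v : ℝ => (max 0 v) ^ 2) =ᶠ[nhds u] fun v => v ^ 2 := by
      filter_upwards [Ioi_mem_nhds h] with v hv
      rw [max_eq_right (le_of_lt hv)]
    simpa using (hasDerivAt_pow 2 u).congr_of_eventuallyEq this

lemma bump_exists {d : ℕ} (w : EuclideanSpace ℝ (Fin d)) (R b : ℝ) (hR : 0 < R) (hb : 0 < b)
    (hb2 : b ≤ 1 / 2) :
    ∃ (β : EuclideanSpace ℝ (Fin d) → ℝ)
      (G : EuclideanSpace ℝ (Fin d) → EuclideanSpace ℝ (Fin d)),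
      (∀ y, HasGradientAt β (G y) y) ∧ β 0 = 0 ∧ G 0 = w ∧
      (∀ y, R ≤ ‖y‖ → β y = 0 ∧ G y = 0) ∧ (∀ y, |β y| ≤ ‖w‖ * ‖y‖) ∧
      (∀ y, ‖y‖ ≤ R → ∃ η s : ℝ, 0 ≤ s ∧ 0 ≤ η ∧ s ≤ 1 - η ∧ ‖y‖ ≤ R * s ∧
        ‖G y - η • w‖ ≤ 4 * b * s * ‖w‖) := by
  set t : EuclideanSpace ℝ (Fin d) → ℝ := fun y => ‖y‖ ^ 2 / R ^ 2 with ht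
  set s : EuclideanSpace ℝ (Fin d) → ℝ := fun y => (t y) ^ b with hs
  set η : EuclideanSpace ℝ (Fin d) → ℝ := fun y => (max 0 (1 - s y)) ^ 2 with hη
  have ht0 : ∀ y, 0 ≤ t y := fun y => by simp only [ht]; positivity
  have hs0 : ∀ y, 0 ≤ s y := fun y => Real.rpow_nonneg (ht0 y) b
  have hη0 : ∀ y, 0 ≤ η y := fun y => sq_nonneg _
  have hη1 : ∀ y, η y ≤ 1 := fun y => by
    have h1 : max 0 (1 - s y) ≤ 1 := max_le (by norm_num) (by linarith [hs0 y])
    have h2 : 0 ≤ max 0 (1 - s y) := le_max_left _ _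
    simp only [hη]; nlinarith
  have hz : η 0 = 1 := by simp [hη, hs, ht, Real.zero_rpow hb.ne']
  have hcont : Continuous η := by
    have h1 : Continuous t := by simp only [ht]; fun_prop
    have h2 : Continuous s := h1.rpow_const (fun y => Or.inr hb.le)
    simp only [hη]; fun_prop
  have hbig : ∀ y, R ≤ ‖y‖ → max 0 (1 - s y) = 0 := fun y hy => by
    have : 1 ≤ t y := by
      simp only [ht]; rw [le_div_iff₀ (by positivity), one_mul]; gcongr
    have : 1 ≤ s y := Real.one_le_rpow this hb.le
    exact max_eq_left (by linarith)
  refine ⟨fun y => η y * ⟪w, y⟫, fun y => η y • w +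
    (-(2 * max 0 (1 - s y)) * (b * (t y) ^ (b - 1)) * (2 / R ^ 2) * ⟪w, y⟫) • y, ?_, by simp,
    by simp [hz], ?_, ?_, ?_⟩
  · intro y
    rw [hasGradientAt_iff_hasFDerivAt]
    by_cases hy : y = 0
    · subst hy
      rw [hasFDerivAt_iff_isLittleO_nhds_zero]
      simp only [zero_add, inner_zero_right, mul_zero, sub_zero, smul_zero, add_zero, hz, one_smul,
        InnerProductSpace.toDual_apply_apply]
      have h1 : (fun h : EuclideanSpace ℝ (Fin d) => η h * ⟪w, h⟫ - ⟪w, h⟫) =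
          fun h => (η h - 1) * ⟪w, h⟫ := by ext h; ring
      rw [h1]
      have h2 : (fun h : EuclideanSpace ℝ (Fin d) => η h - 1) =o[nhds 0] fun _ => (1 : ℝ) := by
        rw [Asymptotics.isLittleO_one_iff]
        have := (hcont.tendsto 0).sub_const 1
        simpa [hz] using this
      have h3 : (fun h : EuclideanSpace ℝ (Fin d) => ⟪w, h⟫) =O[nhds 0] fun h => ‖h‖ := by
        refine Asymptotics.IsBigO.of_bound ‖w‖ (Filter.Eventually.of_forall fun h => ?_)
        simpa using norm_inner_le_norm (𝕜 := ℝ) w h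
      have h4 := h2.mul_isBigO h3
      simp only [one_mul] at h4
      exact h4.of_norm_right
    · have htp : 0 < t y := by
        have := norm_pos_iff.mpr hy
        simp only [ht]; positivity
      have hk : HasDerivAt (fun τ : ℝ => (max 0 (1 - τ ^ b)) ^ 2)
          (2 * max 0 (1 - s y) * (-(b * (t y) ^ (b - 1)))) (t y) := by
        have e1 : HasDerivAt (fun τ : ℝ => 1 - τ ^ b) (-(b * (t y) ^ (b - 1))) (t y) :=
          (Real.hasDerivAt_rpow_const (Or.inl htp.ne')).const_sub 1
        exact (hasDerivAt_posPart_sq (1 - s y)).comp (t y) e1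
      have ht' : HasFDerivAt t ((1 / R ^ 2) • (2 • innerSL ℝ y)) y := by
        have := (hasStrictFDerivAt_norm_sq y).hasFDerivAt.const_mul (1 / R ^ 2)
        have e : t = fun y => 1 / R ^ 2 * ‖y‖ ^ 2 := by ext; simp only [ht]; ring
        rw [e]; exact this
      have hη' : HasFDerivAt η _ y := hk.comp_hasFDerivAt y ht'
      have hw : HasFDerivAt (fun y : EuclideanSpace ℝ (Fin d) => ⟪w, y⟫) (innerSL ℝ w) y :=
        (innerSL ℝ w).hasFDerivAt
      refine (hη'.mul hw).congr_fderiv ?_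
      ext v
      simp [inner_add_left, inner_smul_left]
      ring
  · intro y hy
    have := hbig y hy
    simp [hη, this]
  · intro y
    rw [abs_mul, abs_of_nonneg (hη0 y)]
    have := abs_real_inner_le_norm w y
    nlinarith [hη1 y, hη0 y, abs_nonneg ⟪w, y⟫]
  · intro y hy
    have ht1 : t y ≤ 1 := by
      simp only [ht]; rw [div_le_one (by positivity)]; gcongr
    have hs1 : s y ≤ 1 := Real.rpow_le_one (ht0 y) ht1 hb.le
    have hm : max 0 (1 - s y) = 1 - s y := max_eq_right (by linarith)
    refine ⟨η y, s y, hs0 y, hη0 y, ?_, ?_, ?_⟩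
    · simp only [hη, hm]; nlinarith [hs0 y]
    · by_cases hy0 : y = 0
      · subst hy0; simpa using mul_nonneg hR.le (hs0 0)
      have htp : 0 < t y := by
        have := norm_pos_iff.mpr hy0
        simp only [ht]; positivity
      have h1 : (t y) ^ (1 / 2 : ℝ) ≤ s y := Real.rpow_le_rpow_of_exponent_ge htp ht1 hb2
      have h2 : (t y) ^ (1 / 2 : ℝ) = ‖y‖ / R := by
        rw [← Real.sqrt_eq_rpow]
        simp only [ht, ← div_pow]
        exact Real.sqrt_sq (by positivity)
      rw [h2, div_le_iff₀ hR] at h1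
      linarith
    · simp only [add_sub_cancel_left, norm_smul, Real.norm_eq_abs, hm]
      by_cases hy0 : y = 0
      · subst hy0; simp only [norm_zero, mul_zero]
        have := hs0 0
        positivity
      have htp : 0 < t y := by
        have := norm_pos_iff.mpr hy0
        simp only [ht]; positivity
      have e1 : (t y) ^ (b - 1) = s y / t y := Real.rpow_sub_one htp.ne' b
      rw [e1]
      have hyp := norm_pos_iff.mpr hy0
      have e2 : s y / t y = s y * R ^ 2 / ‖y‖ ^ 2 := by
        simp only [ht]; field_simp
      rw [e2, abs_mul]
      have e3 : |-(2 * (1 - s y)) * (b * (s y * R ^ 2 / ‖y‖ ^ 2)) * (2 / R ^ 2)| =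
          4 * b * (s y * (1 - s y)) / ‖y‖ ^ 2 := by
        have : -(2 * (1 - s y)) * (b * (s y * R ^ 2 / ‖y‖ ^ 2)) * (2 / R ^ 2) =
          -(4 * b * (s y * (1 - s y)) / ‖y‖ ^ 2) := by field_simp; ring
        rw [this, abs_neg, abs_of_nonneg]
        have := hs0 y
        have : 0 ≤ 1 - s y := by linarith
        positivity
      rw [e3]
      have h5 := abs_real_inner_le_norm w y
      have h6 : 0 ≤ 1 - s y := by linarith
      have h7 := hs0 y
      calc 4 * b * (s y * (1 - s y)) / ‖y‖ ^ 2 * |⟪w, y⟫| * ‖y‖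
          ≤ 4 * b * (s y * (1 - s y)) / ‖y‖ ^ 2 * (‖w‖ * ‖y‖) * ‖y‖ := by gcongr
        _ = 4 * b * (s y * (1 - s y)) * ‖w‖ := by field_simp
        _ ≤ 4 * b * (s y * 1) * ‖w‖ := by gcongr; linarith
        _ = 4 * b * s y * ‖w‖ := by ring

lemma ptw_bound {d : ℕ} (μ L : ℝ) (hμ : 0 < μ) (hL : μ < L)
    (z zj g e : EuclideanSpace ℝ (Fin d)) (R η s : ℝ) (hD : 0 < ‖zj‖)
    (hg1 : μ * ‖zj‖ ^ 2 ≤ ⟪g, zj⟫) (hg2 : ‖g‖ ≤ L * ‖zj‖)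
    (hR : 40 * L * R ≤ (L - μ) * ‖zj‖) (hs0 : 0 ≤ s) (hη0 : 0 ≤ η) (hsη : s ≤ 1 - η)
    (hy : ‖z - zj‖ ≤ R * s)
    (he : ‖e - η • (g - ((μ + L) / 2) • zj)‖ ≤
      4 * ((L - μ) / (64 * L)) * s * ‖g - ((μ + L) / 2) • zj‖) :
    μ * ‖z‖ ^ 2 ≤ ⟪((μ + L) / 2) • z + e, z⟫ ∧ ‖((μ + L) / 2) • z + e‖ ≤ L * ‖z‖ := by
  have hL0 : 0 < L := hμ.trans hL
  set D := ‖zj‖ with hDdef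
  set m := (μ + L) / 2 with hm
  have hm0 : 0 < m := by positivity
  set y := z - zj with hydef
  set w := g - m • zj with hw
  set ε := e - η • w with hε
  have hzD : D ≤ ‖z‖ + ‖y‖ := by
    have : zj = z - y := by rw [hydef]; abel
    rw [hDdef, this]; exact norm_sub_le _ _
  have h5 : 5 * L * ‖y‖ ≤ (L - μ) * s * D / 8 := by
    have h1 : 5 * L * ‖y‖ ≤ 5 * L * (R * s) := by gcongr
    have h2 := mul_le_mul_of_nonneg_right hR hs0
    nlinarith
  have hwn : ‖w‖ ≤ 2 * L * D := by
    have h1 := norm_sub_le g (m • zj)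
    rw [norm_smul, Real.norm_eq_abs, abs_of_pos hm0] at h1
    have : m * D ≤ L * D := by gcongr; rw [hm]; linarith
    linarith
  have hεn : ‖ε‖ ≤ (L - μ) * s * D / 8 := by
    have hLμ : 0 < L - μ := by linarith
    calc ‖ε‖ ≤ 4 * ((L - μ) / (64 * L)) * s * ‖w‖ := he
      _ ≤ 4 * ((L - μ) / (64 * L)) * s * (2 * L * D) := by gcongr
      _ = (L - μ) * s * D / 8 := by field_simp; ring
  have hs1 : s ≤ 1 := by linarith
  have hη1 : η ≤ 1 := by linarith
  have hyn := norm_nonneg y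
  have hzn : D / 2 ≤ ‖z‖ := by
    have h1 : 5 * L * ‖y‖ ≤ L * D / 8 := by
      have : (L - μ) * s * D ≤ L * 1 * D := by gcongr; linarith
      linarith
    have h2 : 5 * ‖y‖ ≤ D / 8 := by
      have : L * (5 * ‖y‖) ≤ L * (D / 8) := by linarith
      exact le_of_mul_le_mul_left this hL0
    linarith
  have key : 5 * L * ‖y‖ + ‖ε‖ ≤ (L - μ) / 2 * (1 - η) * ‖z‖ := by
    have hLμ : 0 < L - μ := by linarith
    calc 5 * L * ‖y‖ + ‖ε‖ ≤ (L - μ) / 2 * s * (D / 2) := by linarith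
      _ ≤ (L - μ) / 2 * (1 - η) * ‖z‖ := by gcongr
  have hF : m • z + e = (m * (1 - η)) • z + η • g + (η * m) • y + ε := by
    rw [hε, hw, hydef]; module
  have hηy : η * ‖y‖ ≤ ‖y‖ := by nlinarith
  have hmL : m ≤ L := by rw [hm]; linarith
  have hzp : 0 < ‖z‖ := by linarith
  rw [hF]
  constructor
  · rw [inner_add_left, inner_add_left, inner_add_left, inner_smul_left, inner_smul_left,
      inner_smul_left, real_inner_self_eq_norm_sq]
    simp only [conj_trivial]
    have a1 : ⟪g, z⟫ = ⟪g, zj⟫ + ⟪g, y⟫ := by rw [← inner_add_right, hydef]; congr 1; abel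
    have a2 : -(‖g‖ * ‖y‖) ≤ ⟪g, y⟫ := (abs_le.mp (abs_real_inner_le_norm g y)).1
    have a3 : -(‖y‖ * ‖z‖) ≤ ⟪y, z⟫ := (abs_le.mp (abs_real_inner_le_norm y z)).1
    have a4 : -(‖ε‖ * ‖z‖) ≤ ⟪ε, z⟫ := (abs_le.mp (abs_real_inner_le_norm ε z)).1
    have a5 : ‖z‖ - ‖y‖ ≤ D := by
      have : z = zj + y := by rw [hydef]; abel
      have := norm_add_le zj y
      rw [← ‹z = zj + y›] at this; linarith
    have a6 : ‖z‖ ^ 2 - 2 * ‖z‖ * ‖y‖ ≤ D ^ 2 := by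
      rcases le_total ‖z‖ (2 * ‖y‖) with h | h
      · have : ‖z‖ * (‖z‖ - 2 * ‖y‖) ≤ 0 :=
          mul_nonpos_of_nonneg_of_nonpos hzp.le (by linarith)
        linarith [sq_nonneg D]
      · have h0 : 0 ≤ ‖z‖ - ‖y‖ := by linarith
        have : (‖z‖ - ‖y‖) ^ 2 ≤ D ^ 2 := by gcongr
        linarith [sq_nonneg ‖y‖]
    have a7 : ‖g‖ * ‖y‖ ≤ 2 * L * ‖z‖ * ‖y‖ := by
      gcongr
      have : L * D ≤ L * (2 * ‖z‖) := by gcongr; linarith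
      linarith
    have b1 : μ * ‖z‖ ^ 2 - 2 * L * ‖z‖ * ‖y‖ - 2 * L * ‖z‖ * ‖y‖ ≤ ⟪g, z⟫ := by
      have : μ * (‖z‖ ^ 2 - 2 * ‖z‖ * ‖y‖) ≤ μ * D ^ 2 := by gcongr
      have h' : μ * (2 * ‖z‖ * ‖y‖) ≤ L * (2 * ‖z‖ * ‖y‖) := by gcongr
      linarith
    have b2 := mul_le_mul_of_nonneg_left b1 hη0
    have b3 : η * m * (-(‖y‖ * ‖z‖)) ≤ η * m * ⟪y, z⟫ := by gcongr
    have b4 : η * ‖y‖ * (m * ‖z‖) ≤ ‖y‖ * (L * ‖z‖) := by gcongr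
    have b5 : η * ‖y‖ * (4 * L * ‖z‖) ≤ ‖y‖ * (4 * L * ‖z‖) := by gcongr
    have b6 := mul_le_mul_of_nonneg_right key hzp.le
    have hmm : m * (1 - η) * ‖z‖ ^ 2 =
        μ * (1 - η) * ‖z‖ ^ 2 + (L - μ) / 2 * (1 - η) * ‖z‖ * ‖z‖ := by rw [hm]; ring
    rw [hmm]
    linarith
  · have n1 : ‖(m * (1 - η)) • z + η • g + (η * m) • y + ε‖ ≤
        m * (1 - η) * ‖z‖ + η * ‖g‖ + η * m * ‖y‖ + ‖ε‖ := by
      refine (norm_add_le _ _).trans ?_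
      gcongr
      refine (norm_add₃_le).trans ?_
      rw [norm_smul, norm_smul, norm_smul, Real.norm_eq_abs, Real.norm_eq_abs, Real.norm_eq_abs,
        abs_of_nonneg hη0, abs_of_nonneg (mul_nonneg hη0 hm0.le),
        abs_of_nonneg (mul_nonneg hm0.le (by linarith))]
    refine n1.trans ?_
    have c1 : η * ‖g‖ ≤ η * (L * (‖z‖ + ‖y‖)) := by
      gcongr; exact hg2.trans (by gcongr)
    have c2 : η * ‖y‖ * m ≤ ‖y‖ * L := by gcongr
    have c3 : η * ‖y‖ * L ≤ ‖y‖ * L := by gcongr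
    have hmm : m * (1 - η) * ‖z‖ =
        L * (1 - η) * ‖z‖ - (L - μ) / 2 * (1 - η) * ‖z‖ := by rw [hm]; ring
    rw [hmm]
    linarith [mul_nonneg hL0.le hyn]


/-- Data consistency at a point `p` with gradient `γ`, relative to minimizer `xs`. -/
def GoodData {d : ℕ} (μ L : ℝ) (p γ xs : EuclideanSpace ℝ (Fin d)) : Prop :=
  p ≠ xs ∧ μ * ‖p - xs‖ ^ 2 ≤ ⟪γ, p - xs⟫ ∧ ‖γ‖ ≤ L * ‖p - xs‖

/-- Sphere in an affine subspace. -/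
def sphereIn {d : ℕ} (H : AffineSubspace ℝ (EuclideanSpace ℝ (Fin d)))
    (c : EuclideanSpace ℝ (Fin d)) (r : ℝ) : Set (EuclideanSpace ℝ (Fin d)) :=
  {x | x ∈ H ∧ ‖x - c‖ = r}

lemma exists_dir {d : ℕ} (V : Submodule ℝ (EuclideanSpace ℝ (Fin d)))
    (hV : 0 < Module.finrank ℝ V) (z : EuclideanSpace ℝ (Fin d)) :
    ∃ u ∈ V, ‖u‖ = 1 ∧ ∃ q : ℝ, 0 ≤ q ∧ ∀ y ∈ V, ⟪z, y⟫ = q * ⟪u, y⟫ := by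
  have key : ∀ y ∈ V, ⟪z, y⟫ = ⟪V.starProjection z, y⟫ := by
    intro y hy
    have := Submodule.starProjection_inner_eq_zero (K := V) z y hy
    rw [inner_sub_left] at this
    linarith
  by_cases hQ : V.starProjection z = 0
  · haveI : Nontrivial V := Module.finrank_pos_iff.mp hV
    obtain ⟨v, hv⟩ := exists_ne (0 : V)
    have hv' : (v : EuclideanSpace ℝ (Fin d)) ≠ 0 := by simpa using hv
    refine ⟨(‖(v : EuclideanSpace ℝ (Fin d))‖⁻¹ : ℝ) • (v : EuclideanSpace ℝ (Fin d)),
      V.smul_mem _ v.2, norm_smul_inv_norm hv', 0, le_rfl, ?_⟩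
    intro y hy
    rw [key y hy, hQ]; simp
  · refine ⟨(‖V.starProjection z‖⁻¹ : ℝ) • V.starProjection z,
      V.smul_mem _ (Submodule.starProjection_apply_mem V z), norm_smul_inv_norm hQ,
      ‖V.starProjection z‖, norm_nonneg _, ?_⟩
    intro y hy
    rw [key y hy, inner_smul_left]
    have := norm_ne_zero_iff.mpr hQ
    simp
    field_simp

lemma finrank_inf_orth {d : ℕ} (V : Submodule ℝ (EuclideanSpace ℝ (Fin d)))
    (u : EuclideanSpace ℝ (Fin d)) (hu : u ∈ V) (h1 : u ≠ 0) :
    1 + Module.finrank ℝ ↥((ℝ ∙ u)ᗮ ⊓ V) = Module.finrank ℝ V := by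
  rw [← finrank_span_singleton (K := ℝ) h1]
  exact Submodule.finrank_add_inf_finrank_orthogonal
    (by rwa [Submodule.span_singleton_le_iff_mem])

lemma geom_step {d : ℕ} (μ L : ℝ) (hμ : 0 < μ) (hL : μ < L)
    (H : AffineSubspace ℝ (EuclideanSpace ℝ (Fin d))) (c : EuclideanSpace ℝ (Fin d))
    (hc : c ∈ H) (hV : 0 < Module.finrank ℝ H.direction) (r r' : ℝ) (hr : 0 < r) (hr' : 0 ≤ r')
    (hrr : r' ^ 2 = r ^ 2 * (1 - μ ^ 2 / L ^ 2)) (p : EuclideanSpace ℝ (Fin d)) :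
    ∃ (H' : AffineSubspace ℝ (EuclideanSpace ℝ (Fin d))) (c' γ : EuclideanSpace ℝ (Fin d))
      (φ : ℝ), c' ∈ H' ∧ 1 + Module.finrank ℝ H'.direction = Module.finrank ℝ H.direction ∧
      sphereIn H' c' r' ⊆ sphereIn H c r ∧
      ∀ xs ∈ sphereIn H' c' r', GoodData μ L p γ xs ∧ φ = ‖p - xs‖ ^ 2 := by
  obtain ⟨u, huV, hu1, q, hq, hz⟩ := exists_dir H.direction hV (p - c)
  have hL0 : 0 < L := hμ.trans hL
  have hu0 : u ≠ 0 := by rintro rfl; simp at hu1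
  have huu : ⟪u, u⟫ = 1 := by rw [real_inner_self_eq_norm_sq, hu1]; norm_num
  set κ := μ / L with hκ
  have hκ2 : μ ^ 2 / L ^ 2 = κ ^ 2 := by rw [hκ, div_pow]
  have hκ0 : 0 < κ := by positivity
  have hκ1 : κ < 1 := by rw [hκ, div_lt_one hL0]; exact hL
  rw [hκ2] at hrr
  have hr'p : 0 < r' ^ 2 := by
    rw [hrr]; have : 0 < 1 - κ ^ 2 := by nlinarith
    positivity
  set c' := c - (r * κ) • u with hc'
  set v := p - c' with hv
  have hvu : ⟪v, u⟫ = q + r * κ := by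
    have : v = (p - c) + (r * κ) • u := by rw [hv, hc']; abel
    rw [this, inner_add_left, inner_smul_left, hz u huV, huu]; simp
  have hvn : r * κ ≤ ‖v‖ := by
    have := real_inner_le_norm v u
    rw [hvu, hu1] at this; linarith
  have hvp : 0 < ‖v‖ := lt_of_lt_of_le (by positivity) hvn
  have hy : ∀ xs ∈ sphereIn (AffineSubspace.mk' c' ((ℝ ∙ u)ᗮ ⊓ H.direction)) c' r',
      ⟪u, xs - c'⟫ = 0 ∧ xs - c' ∈ H.direction ∧ ‖xs - c'‖ = r' := by
    rintro xs ⟨h1, h2⟩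
    rw [AffineSubspace.mem_mk', vsub_eq_sub] at h1
    exact ⟨Submodule.mem_orthogonal_singleton_iff_inner_right.mp h1.1, h1.2, h2⟩
  set D2 := ‖v‖ ^ 2 + r' ^ 2 with hD2
  refine ⟨AffineSubspace.mk' c' ((ℝ ∙ u)ᗮ ⊓ H.direction), c', (μ * D2 / ‖v‖ ^ 2) • v, D2,
    AffineSubspace.self_mem_mk' _ _, ?_, ?_, ?_⟩
  · rw [AffineSubspace.direction_mk']
    exact finrank_inf_orth _ u huV hu0
  · intro xs hxs
    obtain ⟨h1, h2, h3⟩ := hy xs hxs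
    have e : xs - c = (xs - c') - (r * κ) • u := by rw [hc']; abel
    have hmem : xs - c ∈ H.direction := by
      rw [e]; exact Submodule.sub_mem _ h2 (Submodule.smul_mem _ _ huV)
    refine ⟨?_, ?_⟩
    · have := AffineSubspace.vadd_mem_of_mem_direction hmem hc
      simpa using this
    · have : ‖xs - c‖ ^ 2 = r ^ 2 := by
        rw [e, norm_sub_sq_real, inner_smul_right, real_inner_comm, h1, h3, norm_smul, hu1,
          Real.norm_eq_abs, mul_one, sq_abs, hrr]; ring
      exact (pow_left_inj₀ (norm_nonneg _) hr.le two_ne_zero).mp this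
  · intro xs hxs
    obtain ⟨h1, h2, h3⟩ := hy xs hxs
    have e : p - xs = v - (xs - c') := by rw [hv]; abel
    have hvy : ⟪v, xs - c'⟫ = 0 := by
      have : v = (p - c) + (r * κ) • u := by rw [hv, hc']; abel
      rw [this, inner_add_left, inner_smul_left, hz _ h2, h1]; simp
    have hn : ‖p - xs‖ ^ 2 = D2 := by
      rw [e, norm_sub_sq_real, hvy, h3]; ring
    have hD2p : 0 < D2 := by positivity
    refine ⟨⟨?_, ?_, ?_⟩, hn.symm⟩
    · intro h
      rw [h] at hn; simp at hn; linarith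
    · rw [hn, inner_smul_left, e, inner_sub_right, hvy, real_inner_self_eq_norm_sq]
      simp
      apply le_of_eq
      field_simp
    · rw [norm_smul, Real.norm_eq_abs, abs_of_pos (by positivity)]
      have : μ * ‖p - xs‖ ≤ L * ‖v‖ := by
        apply le_of_sq_le_sq _ (by positivity)
        rw [mul_pow, mul_pow, hn, hD2, hrr]
        have hμκ : μ = κ * L := by rw [hκ]; field_simp
        rw [hμκ]
        have h5 : (r * κ) ^ 2 ≤ ‖v‖ ^ 2 := by gcongr
        have h6 : 0 ≤ L ^ 2 * (1 - κ ^ 2) := by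
          have : 0 < 1 - κ ^ 2 := by nlinarith
          positivity
        nlinarith [mul_le_mul_of_nonneg_left h5 h6]
      rw [← hn]
      calc μ * ‖p - xs‖ ^ 2 / ‖v‖ ^ 2 * ‖v‖ = (μ * ‖p - xs‖) * ‖p - xs‖ / ‖v‖ := by field_simp
        _ ≤ (L * ‖v‖) * ‖p - xs‖ / ‖v‖ := by gcongr
        _ = L * ‖p - xs‖ := by field_simp

lemma interp {d : ℕ} (μ L : ℝ) (hμ : 0 < μ) (hL : μ < L)
    (P : Finset (EuclideanSpace ℝ (Fin d)))
    (g : EuclideanSpace ℝ (Fin d) → EuclideanSpace ℝ (Fin d)) (xs : EuclideanSpace ℝ (Fin d))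
    (hP : ∀ p ∈ P, GoodData μ L p (g p) xs) :
    ∃ f : EuclideanSpace ℝ (Fin d) → ℝ, MemRSIEB μ L f ∧ argminSet f = {xs} ∧
      ∀ p ∈ P, gradient f p = g p ∧ f p = (μ + L) / 4 * ‖p - xs‖ ^ 2 := by
  have hL0 : 0 < L := hμ.trans hL
  have hLμ : 0 < L - μ := by linarith
  -- choose the radius
  obtain ⟨R, hR0, hRD, hRP⟩ : ∃ R : ℝ, 0 < R ∧
      (∀ p ∈ P, 40 * L * R ≤ (L - μ) * ‖p - xs‖) ∧
      (∀ p ∈ P, ∀ q ∈ P, p ≠ q → 2 * R ≤ ‖p - q‖) := by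
    have small : ∀ A B : ℝ, 0 < B → ∀ᶠ R in nhdsWithin (0 : ℝ) (Set.Ioi 0), A * R ≤ B := by
      intro A B hB
      have h1 : Filter.Tendsto (fun R : ℝ => A * R) (nhdsWithin 0 (Set.Ioi 0)) (nhds (A * 0)) :=
        ((continuous_const.mul continuous_id).tendsto 0).mono_left nhdsWithin_le_nhds
      rw [mul_zero] at h1
      exact (h1.eventually (Iio_mem_nhds hB)).mono fun _ h => le_of_lt h
    have e1 : ∀ᶠ R in nhdsWithin (0 : ℝ) (Set.Ioi 0),
        ∀ p ∈ P, 40 * L * R ≤ (L - μ) * ‖p - xs‖ := by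
      rw [Filter.eventually_all_finset]
      intro p hp
      exact small _ _ (mul_pos hLμ (norm_pos_iff.mpr (sub_ne_zero.mpr (hP p hp).1)))
    have e2 : ∀ᶠ R in nhdsWithin (0 : ℝ) (Set.Ioi 0),
        ∀ p ∈ P, ∀ q ∈ P, p ≠ q → 2 * R ≤ ‖p - q‖ := by
      rw [Filter.eventually_all_finset]
      intro p hp
      rw [Filter.eventually_all_finset]
      intro q hq
      by_cases h : p = q
      · simp [h]
      · exact (small 2 _ (norm_pos_iff.mpr (sub_ne_zero.mpr h))).mono fun _ h _ => h
    obtain ⟨R, ⟨h1, h2⟩, h3⟩ := ((e1.and e2).and self_mem_nhdsWithin).exists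
    exact ⟨R, h3, h1, h2⟩
  set m := (μ + L) / 2 with hm
  have hm0 : 0 < m := by positivity
  have hb1 : 0 < (L - μ) / (64 * L) := by positivity
  have hb2 : (L - μ) / (64 * L) ≤ 1 / 2 := by
    rw [div_le_div_iff₀ (by positivity) (by norm_num)]; linarith
  have hB := fun p => bump_exists (g p - m • (p - xs)) R ((L - μ) / (64 * L)) hR0 hb1 hb2
  choose β G hβ hβ0 hG0 hfar hval hnear using hB
  set f : EuclideanSpace ℝ (Fin d) → ℝ :=
    fun x => m / 2 * ‖x - xs‖ ^ 2 + ∑ p ∈ P, β p (x - p) with hf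
  have hgrad : ∀ x, HasGradientAt f (m • (x - xs) + ∑ p ∈ P, G p (x - p)) x := by
    intro x
    rw [hasGradientAt_iff_hasFDerivAt]
    have h1 : HasFDerivAt (fun x : EuclideanSpace ℝ (Fin d) => m / 2 * ‖x - xs‖ ^ 2)
        ((m / 2) • (2 • innerSL ℝ (x - xs))) x := by
      have e0 : HasFDerivAt (fun x : EuclideanSpace ℝ (Fin d) => x - xs)
        (ContinuousLinearMap.id ℝ _) x := (hasFDerivAt_id x).sub_const xs
      have := ((hasStrictFDerivAt_norm_sq (x - xs)).hasFDerivAt.comp x e0).const_mul (m / 2)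
      simpa using this
    have h2 : HasFDerivAt (fun x : EuclideanSpace ℝ (Fin d) => ∑ p ∈ P, β p (x - p))
        (∑ p ∈ P, InnerProductSpace.toDual ℝ _ (G p (x - p))) x := by
      refine HasFDerivAt.fun_sum fun p _ => ?_
      have e0 : HasFDerivAt (fun x : EuclideanSpace ℝ (Fin d) => x - p)
        (ContinuousLinearMap.id ℝ _) x := (hasFDerivAt_id x).sub_const p
      have := (hasGradientAt_iff_hasFDerivAt.mp (hβ p (x - p))).comp x e0
      rw [ContinuousLinearMap.comp_id] at this
      exact this
    refine (h1.add h2).congr_fderiv ?_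
    rw [map_add, map_sum, map_smul]
    congr 1
    ext v
    simp
    ring
  -- at most one bump is active
  have hactive : ∀ x, (∑ p ∈ P, β p (x - p) = 0 ∧ ∑ p ∈ P, G p (x - p) = 0) ∨
      ∃ p ∈ P, ‖x - p‖ < R ∧ ∑ p ∈ P, β p (x - p) = β p (x - p) ∧
        ∑ p ∈ P, G p (x - p) = G p (x - p) := by
    intro x
    by_cases h : ∃ p ∈ P, ‖x - p‖ < R
    · right
      obtain ⟨p, hp, hpx⟩ := h
      have hq : ∀ q ∈ P, q ≠ p → R ≤ ‖x - q‖ := by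
        intro q hq hqp
        have h1 := hRP q hq p hp hqp
        have h2 : ‖q - p‖ ≤ ‖x - p‖ + ‖x - q‖ := by
          have : q - p = (x - p) - (x - q) := by abel
          rw [this]; exact norm_sub_le _ _
        linarith
      refine ⟨p, hp, hpx, ?_, ?_⟩
      · exact Finset.sum_eq_single_of_mem p hp fun q hq' hqp => (hfar q _ (hq q hq' hqp)).1
      · exact Finset.sum_eq_single_of_mem p hp fun q hq' hqp => (hfar q _ (hq q hq' hqp)).2
    · left
      push Not at h
      exact ⟨Finset.sum_eq_zero fun p hp => (hfar p _ (h p hp)).1,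
        Finset.sum_eq_zero fun p hp => (hfar p _ (h p hp)).2⟩
  have hRD' : ∀ p ∈ P, 40 * R ≤ ‖p - xs‖ := by
    intro p hp
    have h1 := hRD p hp
    have h2 : L * (40 * R) ≤ L * ‖p - xs‖ := by
      nlinarith [mul_nonneg hμ.le (norm_nonneg (p - xs))]
    exact le_of_mul_le_mul_left h2 hL0
  have hfxs : f xs = 0 := by
    have : ∑ p ∈ P, β p (xs - p) = 0 := Finset.sum_eq_zero fun p hp => by
      refine (hfar p _ ?_).1
      rw [norm_sub_rev]; linarith [hRD' p hp]
    simp [hf, this]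
  have hfpos : ∀ x, x ≠ xs → 0 < f x := by
    intro x hx
    have hxp : 0 < ‖x - xs‖ := norm_pos_iff.mpr (sub_ne_zero.mpr hx)
    rcases hactive x with ⟨h, _⟩ | ⟨p, hp, hpR, h, _⟩
    · simp only [hf, h]; positivity
    · simp only [hf, h]
      have h1 := (abs_le.mp (hval p (x - p))).1
      obtain ⟨_, _, hg2⟩ := hP p hp
      have hD := hRD' p hp
      have hD2 := hRD p hp
      set D := ‖p - xs‖
      have hD0 : 0 < D := by linarith
      have hwn : ‖g p - m • (p - xs)‖ ≤ 2 * L * D := by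
        have h1 := norm_sub_le (g p) (m • (p - xs))
        rw [norm_smul, Real.norm_eq_abs, abs_of_pos hm0] at h1
        have : m * D ≤ L * D := by gcongr; rw [hm]; linarith
        linarith
      have h3 : ‖g p - m • (p - xs)‖ * ‖x - p‖ ≤ 2 * L * D * R := by gcongr
      have h4 : D ≤ ‖x - xs‖ + ‖x - p‖ := by
        have : p - xs = (x - xs) - (x - p) := by abel
        change ‖p - xs‖ ≤ _
        rw [this]; exact norm_sub_le _ _
      have h5 : D / 2 ≤ ‖x - xs‖ := by linarith
      have h6 : m / 2 * (D / 2) ^ 2 ≤ m / 2 * ‖x - xs‖ ^ 2 := by gcongr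
      have h7 : 2 * L * D * R ≤ (L - μ) * D / 20 * D := by nlinarith
      have h8 : (L - μ) * D / 20 * D < m / 2 * (D / 2) ^ 2 := by
        rw [hm]
        have : 0 < D ^ 2 := by positivity
        nlinarith
      linarith
  have hargmin : argminSet f = {xs} := by
    ext z
    change (∀ y, f z ≤ f y) ↔ z = xs
    constructor
    · intro h
      by_contra hz
      have := hfpos z hz
      have := h xs
      linarith
    · rintro rfl y
      by_cases hy : y = z
      · rw [hy]
      · rw [hfxs]; exact (hfpos y hy).le
  have hK : ∀ x, μ * ‖x - xs‖ ^ 2 ≤ ⟪gradient f x, x - xs⟫ ∧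
      ‖gradient f x‖ ≤ L * ‖x - xs‖ := by
    intro x
    rw [(hgrad x).gradient]
    rcases hactive x with ⟨_, h⟩ | ⟨p, hp, hpR, _, h⟩
    · rw [h, add_zero, inner_smul_left, norm_smul, real_inner_self_eq_norm_sq, Real.norm_eq_abs,
        abs_of_pos hm0]
      simp only [conj_trivial]
      constructor
      · gcongr; rw [hm]; linarith
      · gcongr; rw [hm]; linarith
    · rw [h]
      obtain ⟨η, s, a1, a2, a3, a4, a5⟩ := hnear p (x - p) hpR.le
      obtain ⟨g0, g1, g2⟩ := hP p hp
      refine ptw_bound μ L hμ hL (x - xs) (p - xs) (g p) _ R η s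
        (norm_pos_iff.mpr (sub_ne_zero.mpr g0)) g1 g2 (hRD p hp) a1 a2 a3 ?_ a5
      rwa [sub_sub_sub_cancel_right]
  refine ⟨f, ⟨fun x => (hgrad x).differentiableAt, ?_, ?_, ?_, fun _ => xs, ?_,
    fun x => (hK x).1, fun x => (hK x).2⟩, hargmin, ?_⟩
  · rw [hargmin]; exact Set.singleton_nonempty _
  · rw [hargmin]; exact isClosed_singleton
  · rw [hargmin]; exact convex_singleton _
  · intro x; rw [hargmin]
    refine ⟨rfl, ?_⟩
    rintro y rfl; exact le_rfl
  · intro p hp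
    have hq : ∀ q ∈ P, q ≠ p → R ≤ ‖p - q‖ := by
      intro q hq hqp
      have h1 := hRP p hp q hq hqp.symm
      linarith
    have s1 : ∑ q ∈ P, β q (p - q) = β p (p - p) :=
      Finset.sum_eq_single_of_mem p hp fun q hq' hqp => (hfar q _ (hq q hq' hqp)).1
    have s2 : ∑ q ∈ P, G q (p - q) = G p (p - p) :=
      Finset.sum_eq_single_of_mem p hp fun q hq' hqp => (hfar q _ (hq q hq' hqp)).2
    constructor
    · rw [(hgrad p).gradient, s2, sub_self, hG0]; abel
    · simp only [hf, s1, sub_self, hβ0, hm]; ring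

/-- The invariant of the resisting oracle after `n` steps. -/
structure OracleInv {d : ℕ} (μ L : ℝ) (A : FirstOrderAlgorithm d)
    (x₀ e : EuclideanSpace ℝ (Fin d)) (ρ : ℕ → ℝ) (n : ℕ)
    (x g : ℕ → EuclideanSpace ℝ (Fin d)) (fv : ℕ → ℝ)
    (H : ℕ → AffineSubspace ℝ (EuclideanSpace ℝ (Fin d)))
    (c : ℕ → EuclideanSpace ℝ (Fin d)) : Prop where
  hx0 : x 0 = x₀
  hg0 : g 0 = e
  hx : ∀ j < n, x (j + 1) = A j (fun k : Fin (j + 1) => (x k.val, fv k.val, g k.val))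
  hc : ∀ i ≤ n, c i ∈ H i
  hdim : ∀ i ≤ n, Module.finrank ℝ (H i).direction = d - i - 1
  hnest : ∀ i j, i ≤ j → j ≤ n → sphereIn (H j) (c j) (ρ j) ⊆ sphereIn (H i) (c i) (ρ i)
  hgood : ∀ i ≤ n, ∀ xs ∈ sphereIn (H i) (c i) (ρ i),
    GoodData μ L (x i) (g i) xs ∧ fv i = (μ + L) / 4 * ‖x i - xs‖ ^ 2
  hcons : ∀ i ≤ n, ∀ j ≤ n, x i = x j → g i = g j

lemma oracle_step {d : ℕ} (μ L : ℝ) (hμ : 0 < μ) (hL : μ < L) (A : FirstOrderAlgorithm d)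
    (x₀ e : EuclideanSpace ℝ (Fin d)) (ρ : ℕ → ℝ) (hρ : ∀ i, 0 < ρ i)
    (hρs : ∀ i, ρ (i + 1) ^ 2 = ρ i ^ 2 * (1 - μ ^ 2 / L ^ 2)) (n : ℕ) (hn : n + 1 ≤ d - 2)
    (x g : ℕ → EuclideanSpace ℝ (Fin d)) (fv : ℕ → ℝ)
    (H : ℕ → AffineSubspace ℝ (EuclideanSpace ℝ (Fin d)))
    (c : ℕ → EuclideanSpace ℝ (Fin d)) (h : OracleInv μ L A x₀ e ρ n x g fv H c) :
    ∃ x g fv H c, OracleInv μ L A x₀ e ρ (n + 1) x g fv H c := by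
  set p := A n (fun k : Fin (n + 1) => (x k.val, fv k.val, g k.val)) with hp
  obtain ⟨H', c', γ', φ', hc', hdim', hsub', hgood'⟩ := geom_step μ L hμ hL (H n) (c n)
    (h.hc n le_rfl) (by rw [h.hdim n le_rfl]; omega) (ρ n) (ρ (n + 1)) (hρ n) (hρ _).le (hρs n) p
  obtain ⟨γ, φ, hgoodp, hconsp⟩ : ∃ γ φ, (∀ xs ∈ sphereIn H' c' (ρ (n + 1)),
      GoodData μ L p γ xs ∧ φ = (μ + L) / 4 * ‖p - xs‖ ^ 2) ∧ ∀ j ≤ n, x j = p → g j = γ := by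
    by_cases hj : ∃ j ≤ n, x j = p
    · obtain ⟨j, hjn, hj⟩ := hj
      refine ⟨g j, fv j, ?_, fun k hk hkp => h.hcons k hk j hjn (hkp.trans hj.symm)⟩
      intro xs hxs
      rw [← hj]
      exact h.hgood j hjn xs (h.hnest j n hjn le_rfl (hsub' hxs))
    · refine ⟨γ', (μ + L) / 4 * φ', ?_, fun k hk hkp => (hj ⟨k, hk, hkp⟩).elim⟩
      intro xs hxs
      refine ⟨(hgood' xs hxs).1, ?_⟩
      rw [← (hgood' xs hxs).2]
  have hnn : ¬ (n + 1 ≤ n) := by omega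
  refine ⟨fun k => if k ≤ n then x k else p, fun k => if k ≤ n then g k else γ,
    fun k => if k ≤ n then fv k else φ, fun k => if k ≤ n then H k else H',
    fun k => if k ≤ n then c k else c', ?_, ?_, ?_, ?_, ?_, ?_, ?_, ?_⟩
  · simpa using h.hx0
  · simpa using h.hg0
  · intro j hj
    have e1 : (fun k : Fin (j + 1) => ((if k.val ≤ n then x k.val else p),
        (if k.val ≤ n then fv k.val else φ), (if k.val ≤ n then g k.val else γ))) =
        fun k : Fin (j + 1) => (x k.val, fv k.val, g k.val) := by
      ext1 k
      have : k.val ≤ n := by omega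
      simp [this]
    simp only [e1]
    by_cases hjn : j < n
    · rw [if_pos (by omega), h.hx j hjn]
    · obtain rfl : j = n := by omega
      rw [if_neg hnn]
  · intro i hi
    rcases Nat.le_succ_iff.mp hi with hi | rfl
    · simpa [hi] using h.hc i hi
    · simpa using hc'
  · intro i hi
    rcases Nat.le_succ_iff.mp hi with hi | rfl
    · beta_reduce; rw [if_pos hi]; exact h.hdim i hi
    · have := h.hdim n le_rfl
      beta_reduce; rw [if_neg hnn]
      omega
  · intro i j hij hj
    rcases Nat.le_succ_iff.mp hj with hj | rfl
    · have hi := hij.trans hj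
      simpa [hi, hj] using h.hnest i j hij hj
    · rcases Nat.le_succ_iff.mp hij with hi | rfl
      · simp only [hnn, hi, if_true, if_false]
        exact hsub'.trans (h.hnest i n hi le_rfl)
      · exact subset_rfl
  · intro i hi
    rcases Nat.le_succ_iff.mp hi with hi | rfl
    · simpa [hi] using h.hgood i hi
    · simpa using hgoodp
  · intro i hi j hj
    rcases Nat.le_succ_iff.mp hi with hi | rfl <;> rcases Nat.le_succ_iff.mp hj with hj | rfl
    · simpa [hi, hj] using h.hcons i hi j hj
    · simpa [hi] using hconsp i hi
    · simp only [hj, hnn, if_true, if_false]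
      exact fun hh => (hconsp j hj hh.symm).symm
    · simp

lemma oracle_base {d : ℕ} (hd : 2 ≤ d) (μ L : ℝ) (hμ : 0 < μ) (hL : μ < L) (α : ℝ)
    (hα : μ / L ^ 2 ≤ α) (hα0 : 0 < α) (A : FirstOrderAlgorithm d)
    (x₀ e : EuclideanSpace ℝ (Fin d)) (he : ‖e‖ = 1) (ρ : ℕ → ℝ)
    (hρ0 : ρ 0 ^ 2 = α / μ - α ^ 2) :
    ∃ x g fv H c, OracleInv μ L A x₀ e ρ 0 x g fv H c := by
  have hL0 : 0 < L := hμ.trans hL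
  have he0 : e ≠ 0 := by rintro rfl; simp at he
  set c := x₀ - α • e with hc
  refine ⟨fun _ => x₀, fun _ => e, fun _ => (μ + L) / 4 * (α / μ),
    fun _ => AffineSubspace.mk' c (ℝ ∙ e)ᗮ, fun _ => c, rfl, rfl, by simp, ?_, ?_, ?_, ?_, ?_⟩
  · intro i _; exact AffineSubspace.self_mem_mk' _ _
  · intro i hi
    obtain rfl : i = 0 := by omega
    rw [AffineSubspace.direction_mk']
    have := Submodule.finrank_add_finrank_orthogonal (ℝ ∙ e)
    rw [finrank_span_singleton he0, finrank_euclideanSpace_fin] at this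
    omega
  · intro i j hij hj
    obtain rfl : j = 0 := by omega
    obtain rfl : i = 0 := by omega
    exact subset_rfl
  · intro i hi xs hxs
    obtain rfl : i = 0 := by omega
    obtain ⟨h1, h2⟩ := hxs
    rw [AffineSubspace.mem_mk', vsub_eq_sub, Submodule.mem_orthogonal_singleton_iff_inner_right]
      at h1
    have ee : x₀ - xs = α • e - (xs - c) := by rw [hc]; abel
    have hn : ‖x₀ - xs‖ ^ 2 = α / μ := by
      rw [ee, norm_sub_sq_real, inner_smul_left, h1, h2, norm_smul, he, Real.norm_eq_abs, mul_one,
        sq_abs, hρ0]; simp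
    refine ⟨⟨?_, ?_, ?_⟩, by rw [hn]⟩
    · intro h
      rw [h, sub_self] at hn
      have : 0 < α / μ := by positivity
      rw [← hn] at this
      simp at this
    · rw [hn, ee, inner_sub_right, h1, inner_smul_right, real_inner_self_eq_norm_sq, he]
      apply le_of_eq; field_simp; ring
    · rw [he]
      apply le_of_sq_le_sq _ (by positivity)
      rw [mul_pow, hn]
      rw [div_le_iff₀ (by positivity)] at hα
      rw [← mul_div_assoc, le_div_iff₀ hμ]; linarith
  · intros; rfl

/-- Resisting-oracle lemma: for any first-order algorithm `A` and
starting point `x₀`, there are gradients `g i`, function values `fval i`, and nested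
sets `S i` (for `i ≤ d − 2`) such that each `S i` is a sphere of radius
`r i = √(α₀/μ − α₀²)·‖g 0‖·(1 − μ²/L²)^{i/2}` centered at some `c i` inside an affine
subspace `H i` of dimension `d − i − 1`, and for each `i ≤ d − 2` and each `xs ∈ S i`
there is a function of `RSI⁻(μ) ∩ EB⁺(L)` minimized exactly at `xs` interpolating the
first `i + 1` iterates, values and gradients read by `A`. -/
theorem stmt_12 {d : ℕ} (hd : 2 ≤ d) (μ L : ℝ) (hμ : 0 < μ) (hL : μ < L)
    (α₀ : ℝ) (hα₀ : α₀ ∈ Set.Icc (μ / L ^ 2) (max (μ / L ^ 2) (1 / (2 * μ))))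
    (A : FirstOrderAlgorithm d) (x₀ : EuclideanSpace ℝ (Fin d)) :
    ∃ (g : ℕ → EuclideanSpace ℝ (Fin d)) (fval : ℕ → ℝ)
      (S : ℕ → Set (EuclideanSpace ℝ (Fin d))),
      g 0 ≠ 0 ∧
      (∀ i j, i ≤ j → j ≤ d - 2 → S j ⊆ S i) ∧
      (∀ i ≤ d - 2,
        ∃ (H : AffineSubspace ℝ (EuclideanSpace ℝ (Fin d)))
          (c : EuclideanSpace ℝ (Fin d)), c ∈ H ∧
          Module.finrank ℝ H.direction = d - i - 1 ∧
          S i = {x | x ∈ H ∧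
            ‖x - c‖ = Real.sqrt (α₀ / μ - α₀ ^ 2) * ‖g 0‖ *
              Real.sqrt ((1 - μ ^ 2 / L ^ 2) ^ i)}) ∧
      (∀ x : ℕ → EuclideanSpace ℝ (Fin d), x 0 = x₀ →
        (∀ j, x (j + 1) =
          A j (fun k : Fin (j + 1) => (x k.val, fval k.val, g k.val))) →
        ∀ i ≤ d - 2, ∀ xs ∈ S i,
          ∃ f : EuclideanSpace ℝ (Fin d) → ℝ, MemRSIEB μ L f ∧
            argminSet f = {xs} ∧
            ∀ j ≤ i, gradient f (x j) = g j ∧ f (x j) = fval j) := by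
  have hL0 : 0 < L := hμ.trans hL
  obtain ⟨hα1, hα2⟩ := hα₀
  have hα0 : 0 < α₀ := lt_of_lt_of_le (by positivity) hα1
  have hαμ : α₀ * μ < 1 := by
    rcases le_max_iff.mp hα2 with h | h
    · rw [le_div_iff₀ (by positivity)] at h
      have h2 : μ ^ 2 < L ^ 2 := by gcongr
      have h3 : α₀ * μ * L ^ 2 < 1 * L ^ 2 := by nlinarith
      exact lt_of_mul_lt_mul_right h3 (by positivity)
    · rw [le_div_iff₀ (by positivity)] at h
      linarith
  have hrad : 0 < α₀ / μ - α₀ ^ 2 := by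
    have : α₀ / μ - α₀ ^ 2 = α₀ * (1 - α₀ * μ) / μ := by field_simp
    rw [this]
    have : 0 < 1 - α₀ * μ := by linarith
    positivity
  have hκ : 0 < 1 - μ ^ 2 / L ^ 2 := by
    rw [sub_pos, div_lt_one (by positivity)]; gcongr
  set e : EuclideanSpace ℝ (Fin d) := EuclideanSpace.single ⟨0, by omega⟩ 1 with he
  have he1 : ‖e‖ = 1 := by simp [he]
  set ρ : ℕ → ℝ := fun i => Real.sqrt (α₀ / μ - α₀ ^ 2) * ‖e‖ *
    Real.sqrt ((1 - μ ^ 2 / L ^ 2) ^ i) with hρ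
  have hρ0 : ∀ i, 0 < ρ i := fun i => by
    have h1 := Real.sqrt_pos.mpr hrad
    have h2 := Real.sqrt_pos.mpr (pow_pos hκ i)
    simp only [hρ, he1]; positivity
  have hρ2 : ∀ i, ρ i ^ 2 = (α₀ / μ - α₀ ^ 2) * (1 - μ ^ 2 / L ^ 2) ^ i := fun i => by
    simp only [hρ, he1, mul_pow, one_pow, mul_one]
    rw [Real.sq_sqrt hrad.le, Real.sq_sqrt (pow_pos hκ i).le]
  have hall : ∀ n ≤ d - 2, ∃ x g fv H c, OracleInv μ L A x₀ e ρ n x g fv H c := by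
    intro n
    induction n with
    | zero =>
      intro _
      exact oracle_base hd μ L hμ hL α₀ hα1 hα0 A x₀ e he1 ρ (by rw [hρ2]; simp)
    | succ n ih =>
      intro hn
      obtain ⟨x, g, fv, H, c, h⟩ := ih (by omega)
      exact oracle_step μ L hμ hL A x₀ e ρ hρ0 (fun i => by rw [hρ2, hρ2]; ring) n hn x g fv H c h
  obtain ⟨x, g, fv, H, c, h⟩ := hall (d - 2) le_rfl
  refine ⟨g, fv, fun i => sphereIn (H i) (c i) (ρ i), ?_, h.hnest, ?_, ?_⟩
  · rw [h.hg0]; intro h0; rw [h0] at he1; simp at he1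
  · intro i hi
    refine ⟨H i, c i, h.hc i hi, h.hdim i hi, ?_⟩
    rw [h.hg0]; rfl
  · intro x' hx0 hx' i hi xs hxs
    have hxx : ∀ j ≤ d - 2, x' j = x j := by
      intro j
      induction j using Nat.strong_induction_on with
      | _ j ih =>
        intro hj
        cases j with
        | zero => rw [hx0, h.hx0]
        | succ j =>
          rw [hx' j, h.hx j (by omega)]
          congr 1
          ext1 k
          rw [ih k.val (by omega) (by omega)]
    have hgood : ∀ j ≤ i, GoodData μ L (x j) (g j) xs ∧
        fv j = (μ + L) / 4 * ‖x j - xs‖ ^ 2 := fun j hj =>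
      h.hgood j (hj.trans hi) xs (h.hnest j i hj hi hxs)
    classical
    let P : Finset (EuclideanSpace ℝ (Fin d)) := (Finset.range (i + 1)).image x
    have hex : ∀ p : EuclideanSpace ℝ (Fin d), ∃ γ, ∀ j ≤ i, x j = p → g j = γ := by
      intro p
      by_cases hp : ∃ j ≤ i, x j = p
      · obtain ⟨j, hj, rfl⟩ := hp
        exact ⟨g j, fun k hk hkj => h.hcons k (hk.trans hi) j (hj.trans hi) hkj⟩
      · exact ⟨0, fun k hk hkp => (hp ⟨k, hk, hkp⟩).elim⟩
    choose γ hγ using hex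
    obtain ⟨f, hf1, hf2, hf3⟩ := interp μ L hμ hL P γ xs (by
      intro p hp
      obtain ⟨j, hj, rfl⟩ := Finset.mem_image.mp hp
      have hj' : j ≤ i := by simpa [Nat.lt_succ_iff] using hj
      rw [← hγ (x j) j hj' rfl]
      exact (hgood j hj').1)
    refine ⟨f, hf1, hf2, fun j hj => ?_⟩
    have hjP : x j ∈ P := Finset.mem_image_of_mem x (by simp; omega)
    rw [hxx j (hj.trans hi)]
    obtain ⟨k1, k2⟩ := hf3 (x j) hjP
    exact ⟨k1.trans (hγ (x j) j hj rfl).symm, k2.trans (hgood j hj).2.symm⟩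
end
end

section
/- Initialization of the resisting oracle: let d ≥ 1, μ > 0, L > μ, and α₀ ∈ [μ/L², max(μ/L², 1/(2μ))]. Let x₀ ∈ ℝ^d and g₀ ∈ ℝ^d with g₀ ≠ 0, and set c₀ = x₀ − α₀·g₀. Then for any x* ∈ ℝ^d satisfying ⟨x* − c₀, g₀⟩ = 0 and ‖x* − c₀‖ = √(α₀/μ − α₀²)·‖g₀‖, one has ‖x₀ − x*‖² = (α₀/μ)·‖g₀‖², and there exists a differentiable function f : ℝ^d → ℝ in RSI⁻(μ) ∩ EB⁺(L) whose set of global minimizers is exactly {x*} and which satisfies ∇f(x₀) = g₀ and f(x₀) = ((μ+L)/(4μ))·α₀·‖g₀‖². -/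
noncomputable section

open RealInnerProductSpace

def hh (C : ℝ) (q : ℝ × ℝ) : ℝ := q.1 * ((1 + Real.sqrt (C^2 * q.1^2 + q.2))^2)⁻¹

lemma hh_deriv (C : ℝ) (hC : 0 < C) (b s : ℝ) (hs : 0 ≤ s) :
    ∃ a c : ℝ, HasFDerivAt (hh C) (a • ContinuousLinearMap.fst ℝ ℝ ℝ + c • ContinuousLinearMap.snd ℝ ℝ ℝ) (b, s)
      ∧ |a| ≤ ((1 + Real.sqrt s)^2)⁻¹ ∧ |c| ≤ (C * (1 + Real.sqrt s)^3)⁻¹ ∧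
      (b = 0 → s = 0 → a = 1) := by
  by_cases h0 : C^2 * b^2 + s = 0
  · have hb : b = 0 := by
      have : C^2 * b^2 = 0 := by nlinarith [mul_nonneg (sq_nonneg C) (sq_nonneg b)]
      have h2 : C^2 ≠ 0 := by positivity
      simpa [h2, hC.ne'] using this
    have hs0 : s = 0 := by rw [hb] at h0; simpa using h0
    subst hb hs0
    refine ⟨1, 0, ?_, by simp, by simp; positivity, by simp⟩
    have hcont : ContinuousAt (fun q : ℝ × ℝ => ((1 + Real.sqrt (C^2 * q.1^2 + q.2))^2)⁻¹) (0,0) := by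
      apply ContinuousAt.inv₀
      · fun_prop
      · simp
    rw [hasFDerivAt_iff_isLittleO]
    have h1 : (fun q : ℝ × ℝ => ((1 + Real.sqrt (C^2 * q.1^2 + q.2))^2)⁻¹ - 1) =o[nhds (0,0)] (fun _ => (1:ℝ)) := by
      rw [Asymptotics.isLittleO_one_iff]
      have := hcont.tendsto.sub_const 1
      simpa using this
    have h2 : (fun q : ℝ × ℝ => q.1) =O[nhds (0,0)] (fun q => q - (0,0)) := by
      apply Asymptotics.IsBigO.of_bound 1
      filter_upwards with q
      have := norm_fst_le q
      have e : q - (0,0) = q := by ext <;> simp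
      rw [e]; linarith
    refine (Asymptotics.IsLittleO.of_norm_right ?_)
    have h4 := h2.norm_right.mul_isLittleO h1
    simp only [mul_one] at h4
    refine h4.congr_left ?_
    intro q
    simp [hh]
    ring
  · have hpos : 0 < C^2 * b^2 + s := lt_of_le_of_ne (by positivity) (Ne.symm h0)
    set z := Real.sqrt (C^2 * b^2 + s) with hz
    have hzpos : 0 < z := Real.sqrt_pos.2 hpos
    have hz2 : z^2 = C^2 * b^2 + s := Real.sq_sqrt hpos.le
    have hsz : Real.sqrt s ≤ z := Real.sqrt_le_sqrt (by nlinarith [mul_nonneg (sq_nonneg C) (sq_nonneg b)])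
    have hCb : C * |b| ≤ z := by
      apply Real.le_sqrt_of_sq_le
      rw [mul_pow, sq_abs]; linarith
    have hs0 := Real.sqrt_nonneg s
    have d1 : HasFDerivAt (fun q : ℝ × ℝ => q.1) (ContinuousLinearMap.fst ℝ ℝ ℝ) (b,s) := hasFDerivAt_fst
    have d2 : HasFDerivAt (fun q : ℝ × ℝ => q.2) (ContinuousLinearMap.snd ℝ ℝ ℝ) (b,s) := hasFDerivAt_snd
    have d3 := (((d1.pow 2).const_mul (C^2)).add d2).sqrt h0
    have d4 : HasDerivAt (fun t : ℝ => ((1 + t)^2)⁻¹) (-(2 * (1 + z)) / ((1+z)^2)^2) z := by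
      have hne : (1 + z)^2 ≠ 0 := by positivity
      have h5 : HasDerivAt (fun t : ℝ => (1 + t)^2) (2 * (1 + z)) z := by
        simpa using ((hasDerivAt_id' z).const_add 1).fun_pow 2
      exact h5.fun_inv hne
    have d5 := d1.mul (d4.comp_hasFDerivAt (b,s) d3)
    refine ⟨(1 + z - 2 * C^2 * b^2 / z) / (1+z)^3, - b / (z * (1+z)^3), ?_, ?_, ?_, ?_⟩
    · refine d5.congr_fderiv ?_
      ext
      · simp [← hz]
        field_simp
        ring
      · simp [← hz]
        field_simp
    · have e1 : C^2 * b^2 / z ≤ z := by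
        rw [div_le_iff₀ hzpos]; nlinarith
      have e2 : 0 ≤ C^2 * b^2 / z := by positivity
      have e4 : 2 * C^2 * b^2 / z = 2 * (C^2 * b^2 / z) := by ring
      have e3 : |(1 + z - 2 * C^2 * b^2 / z) / (1+z)^3| ≤ ((1+z)^2)⁻¹ := by
        rw [abs_div, abs_of_pos (by positivity : 0 < (1+z)^3), div_le_iff₀ (by positivity), e4]
        have : ((1+z)^2)⁻¹ * (1+z)^3 = 1 + z := by field_simp
        rw [this, abs_le]; constructor <;> linarith
      refine e3.trans ?_
      gcongr
    · rw [abs_div, abs_neg, abs_of_pos (by positivity : 0 < z * (1+z)^3)]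
      rw [div_le_iff₀ (by positivity), inv_mul_eq_div, le_div_iff₀ (by positivity)]
      calc |b| * (C * (1 + √s)^3) = (C * |b|) * (1 + √s)^3 := by ring
        _ ≤ z * (1+z)^3 := by gcongr
    · intro hb hs'; subst hb hs'; simp at h0

/-- positive part of `1 - R` -/
def pp (R : ℝ) : ℝ := max (1 - R) 0

lemma pp_sq_deriv (R : ℝ) : HasDerivAt (fun R => (pp R)^2) (-2 * pp R) R := by
  have key : HasDerivAt (fun t : ℝ => (max t 0)^2) (2 * max (1-R) 0) (1 - R) := by
    rcases lt_trichotomy (1 - R) 0 with h | h | h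
    · rw [max_eq_right h.le]
      have : HasDerivAt (fun _ : ℝ => (0:ℝ)) (2*0) (1-R) := by simpa using hasDerivAt_const (1-R) (0:ℝ)
      refine this.congr_of_eventuallyEq ?_
      filter_upwards [Iio_mem_nhds h] with t ht
      simp [max_eq_right (le_of_lt (Set.mem_Iio.1 ht))]
    · rw [h]
      simp only [max_self, mul_zero]
      have h1 : (fun t : ℝ => (max t 0)^2) =O[nhds 0] fun t => ‖t - 0‖^2 := by
        apply Asymptotics.IsBigO.of_bound 1
        filter_upwards with t
        rcases le_total t 0 with h | h <;> simp [h, sq_nonneg]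
      have := h1.hasFDerivAt (𝕜 := ℝ) (by norm_num)
      simpa using this.hasDerivAt
    · rw [max_eq_left h.le]
      have : HasDerivAt (fun t : ℝ => t^2) (2*(1-R)) (1-R) := by simpa using hasDerivAt_pow 2 (1-R)
      refine this.congr_of_eventuallyEq ?_
      filter_upwards [Ioi_mem_nhds h] with t ht
      simp [max_eq_left (le_of_lt (Set.mem_Ioi.1 ht))]
  have := key.comp R ((hasDerivAt_id R).const_sub 1)
  refine (this.congr_deriv ?_)
  simp [pp]

def ss (R : ℝ) : ℝ := (pp R)^2 / R^2

lemma pp_nonneg (R : ℝ) : 0 ≤ pp R := le_max_right _ _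

lemma ss_deriv (R : ℝ) (hR : 0 < R) : HasDerivAt ss (-2 * pp R / R^3) R := by
  have := (pp_sq_deriv R).div (hasDerivAt_pow 2 R) (by positivity)
  refine this.congr_deriv ?_
  rcases le_total R 1 with h | h
  · have : pp R = 1 - R := max_eq_left (by linarith)
    rw [this]; field_simp; ring
  · have : pp R = 0 := max_eq_right (by linarith)
    rw [this]; simp

lemma sqrt_ss (R : ℝ) (hR : 0 < R) : Real.sqrt (ss R) = pp R / R := by
  rw [ss, ← div_pow, Real.sqrt_sq (div_nonneg (pp_nonneg R) hR.le)]

section helpers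

variable {d : ℕ}

def psi {d : ℕ} (C : ℝ) (w x : EuclideanSpace ℝ (Fin d)) : ℝ :=
  hh C (⟪w, x⟫ * (Real.sqrt (‖x‖^2))⁻¹, ss (‖x‖^2)) - (pp (‖x‖^2))^2 / C

lemma psi_zero (C : ℝ) (hC : 0 < C) (w : EuclideanSpace ℝ (Fin d)) :
    HasGradientAt (psi C w) 0 0 := by
  have h1 : (fun x => psi C w x + 1 / C) =O[nhds 0] fun x => ‖x - 0‖^2 := by
    apply Asymptotics.IsBigO.of_bound (‖w‖ + 2 / C)
    have hb : Metric.ball (0 : EuclideanSpace ℝ (Fin d)) 1 ∈ nhds 0 := Metric.ball_mem_nhds _ one_pos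
    filter_upwards [hb] with x hx
    have hx1 : ‖x‖ < 1 := by simpa using hx
    by_cases hx0 : x = 0
    · subst hx0
      simp [psi, hh, pp]
    have hn : 0 < ‖x‖ := norm_pos_iff.2 hx0
    have hR : 0 < ‖x‖^2 := by positivity
    have hR1 : ‖x‖^2 < 1 := by nlinarith
    simp only [sub_zero, norm_pow, norm_norm]
    set R := ‖x‖^2 with hRd
    have hpp : pp R = 1 - R := max_eq_left (by linarith)
    have hβ : |⟪w, x⟫ * (Real.sqrt R)⁻¹| ≤ ‖w‖ := by
      rw [hRd, Real.sqrt_sq hn.le, abs_mul, abs_of_pos (inv_pos.2 hn), ← div_eq_mul_inv, div_le_iff₀ hn]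
      exact abs_real_inner_le_norm w x
    set β := ⟪w, x⟫ * (Real.sqrt R)⁻¹ with hβd
    have hz : R⁻¹ ≤ 1 + √(C^2 * β^2 + ss R) := by
      have h2 : √(ss R) ≤ √(C^2 * β^2 + ss R) :=
        Real.sqrt_le_sqrt (by nlinarith [mul_nonneg (sq_nonneg C) (sq_nonneg β)])
      rw [sqrt_ss R hR, hpp] at h2
      have : (1 - R) / R = R⁻¹ - 1 := by field_simp
      linarith
    have hg : ((1 + √(C^2 * β^2 + ss R))^2)⁻¹ ≤ R^2 := by
      rw [inv_le_comm₀ (by positivity) (by positivity), ← inv_pow]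
      gcongr
    have hh1 : |hh C (β, ss R)| ≤ ‖w‖ * R := by
      simp only [hh]
      rw [abs_mul, abs_of_pos (a := (_ : ℝ)⁻¹) (by positivity)]
      calc _ ≤ ‖w‖ * R^2 := by gcongr
        _ ≤ ‖w‖ * R := by gcongr; nlinarith
    have : psi C w x + 1 / C = hh C (β, ss R) + (2 * R - R^2) / C := by
      simp only [psi, ← hRd, ← hβd, hpp]; field_simp; ring
    rw [this, Real.norm_eq_abs]
    refine (abs_add_le _ _).trans ?_
    have h3 : |(2 * R - R^2) / C| ≤ 2 / C * R := by
      rw [abs_of_nonneg (div_nonneg (by nlinarith) hC.le), div_mul_eq_mul_div]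
      gcongr; nlinarith
    linarith
  have h2 := (h1.hasFDerivAt (𝕜 := ℝ) (by norm_num)).sub_const (1 / C)
  rw [hasGradientAt_iff_hasFDerivAt]
  simpa using h2

lemma psi_deriv (C : ℝ) (hC : 0 < C) (w x : EuclideanSpace ℝ (Fin d)) (hx0 : x ≠ 0) :
    ∃ a P : ℝ, HasGradientAt (psi C w)
      (a • ((‖x‖)⁻¹ • w - (⟪w, x⟫ * (‖x‖^3)⁻¹) • x) + (2 * P) • x) x ∧
      0 ≤ P ∧ P ≤ 4 / C * pp (‖x‖^2) ∧ |a| ≤ 1 ∧ (‖x‖ ≤ 1 → |a| ≤ ‖x‖^4) ∧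
      (⟪w, x⟫ = 0 → ‖x‖ = 1 → a = 1) := by
  have hn : 0 < ‖x‖ := norm_pos_iff.2 hx0
  have hR : 0 < ‖x‖^2 := by positivity
  have hss : 0 ≤ ss (‖x‖^2) := by unfold ss; positivity
  obtain ⟨a, c, hd, ha, hc, h1⟩ := hh_deriv C hC (⟪w, x⟫ * (Real.sqrt (‖x‖^2))⁻¹) (ss (‖x‖^2)) hss
  have hpn := pp_nonneg (‖x‖^2)
  have hcb : |c * (-2 * pp (‖x‖^2) / (‖x‖^2)^3)| ≤ 2 / C * pp (‖x‖^2) := by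
    rw [abs_mul]
    have e1 : |(-2 * pp (‖x‖^2) / (‖x‖^2)^3)| = 2 * pp (‖x‖^2) / (‖x‖^2)^3 := by
      rw [abs_div, abs_mul, abs_of_nonneg hpn, abs_of_pos (by positivity : 0 < (‖x‖^2)^3)]; norm_num
    rw [e1]
    rw [sqrt_ss _ hR] at hc
    rcases le_total (‖x‖^2) 1 with h | h
    · have hpp : pp (‖x‖^2) = 1 - ‖x‖^2 := max_eq_left (by linarith)
      have e2 : 1 + pp (‖x‖^2) / ‖x‖^2 = (‖x‖^2)⁻¹ := by rw [hpp]; field_simp; ring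
      rw [e2] at hc
      calc _ ≤ (C * ((‖x‖^2)⁻¹)^3)⁻¹ * (2 * pp (‖x‖^2) / (‖x‖^2)^3) := by gcongr
        _ = _ := by field_simp
    · have hpp : pp (‖x‖^2) = 0 := max_eq_right (by linarith)
      rw [hpp]; simp
  refine ⟨a, c * (-2 * pp (‖x‖^2) / (‖x‖^2)^3) + 2 / C * pp (‖x‖^2), ?_, ?_, ?_, ?_, ?_, ?_⟩
  · rw [hasGradientAt_iff_hasFDerivAt]
    have dN : HasFDerivAt (fun x : EuclideanSpace ℝ (Fin d) => ‖x‖^2) (2 • innerSL ℝ x) x :=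
      (hasStrictFDerivAt_norm_sq x).hasFDerivAt
    have dS := dN.sqrt hR.ne'
    have hsne : Real.sqrt (‖x‖^2) ≠ 0 := by rw [Real.sqrt_sq hn.le]; exact hn.ne'
    have dI := (hasDerivAt_inv hsne).comp_hasFDerivAt x dS
    have dw : HasFDerivAt (fun x : EuclideanSpace ℝ (Fin d) => ⟪w, x⟫) (innerSL ℝ w) x :=
      (innerSL ℝ w).hasFDerivAt
    have dβ := dw.mul dI
    have ds := (ss_deriv _ hR).comp_hasFDerivAt x dN
    have dp := (((pp_sq_deriv (‖x‖^2)).div_const C).comp_hasFDerivAt x dN)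
    have dh := hd.comp x (dβ.prodMk ds)
    have := dh.sub dp
    refine this.congr_fderiv ?_
    ext y
    simp [inner_add_left, inner_sub_left, inner_smul_left, Real.sqrt_sq hn.le]
    field_simp
    ring
  · linarith [(abs_le.1 hcb).1]
  · have := (abs_le.1 hcb).2
    have e : 4 / C * pp (‖x‖^2) = 2 / C * pp (‖x‖^2) + 2 / C * pp (‖x‖^2) := by ring
    linarith
  · refine ha.trans (inv_le_one_of_one_le₀ ?_)
    have := Real.sqrt_nonneg (ss (‖x‖^2))
    nlinarith
  · intro hx1
    have h : ‖x‖^2 ≤ 1 := by nlinarith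
    have hpp : pp (‖x‖^2) = 1 - ‖x‖^2 := max_eq_left (by linarith)
    have e2 : 1 + pp (‖x‖^2) / ‖x‖^2 = (‖x‖^2)⁻¹ := by rw [hpp]; field_simp; ring
    rw [sqrt_ss _ hR, e2] at ha
    refine ha.trans (le_of_eq ?_)
    field_simp
  · intro hw hx1
    apply h1
    · rw [hw]; simp
    · simp [hx1, ss, pp]

lemma core (μ L : ℝ) (hμ : 0 < μ) (hL : μ < L) (v w : EuclideanSpace ℝ (Fin d))
    (hv : ‖v‖ = 1) (hvw : ⟪w, v⟫ = 0) (hw : 0 < ‖w‖) (hwL : ‖w‖^2 ≤ L^2 - μ^2) :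
    ∃ (f : EuclideanSpace ℝ (Fin d) → ℝ) (G : EuclideanSpace ℝ (Fin d) → EuclideanSpace ℝ (Fin d)),
      (∀ x, HasGradientAt f (G x) x) ∧ G v = μ • v + w ∧
      ∀ x, μ * ‖x‖^2 ≤ ⟪G x, x⟫ ∧ ‖G x‖ ≤ L * ‖x‖ := by
  obtain ⟨C, hC, hCw⟩ : ∃ C : ℝ, 0 < C ∧ 64 / C^2 + 16 * μ / C ≤ ‖w‖^2 := by
    refine ⟨max 1 ((64 + 16 * μ) / ‖w‖^2), by positivity, ?_⟩
    set C := max 1 ((64 + 16 * μ) / ‖w‖^2)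
    have h1 : 1 ≤ C := le_max_left _ _
    have h2 : (64 + 16 * μ) / ‖w‖^2 ≤ C := le_max_right _ _
    have h3 : 64 / C^2 ≤ 64 / C := by gcongr; nlinarith
    have h4 : (64 + 16 * μ) / C ≤ ‖w‖^2 := by
      rw [div_le_iff₀ (by positivity)] at h2 ⊢
      linarith
    have : (64 + 16 * μ) / C = 64 / C + 16 * μ / C := by ring
    linarith
  have key : ∀ x : EuclideanSpace ℝ (Fin d), ∃ g : EuclideanSpace ℝ (Fin d),
      HasGradientAt (psi C w) g x ∧ (x = v → g = w) ∧ 0 ≤ ⟪g, x⟫ ∧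
      ‖g‖^2 + 2 * μ * ⟪g, x⟫ ≤ (L^2 - μ^2) * ‖x‖^2 := by
    intro x
    by_cases hx0 : x = 0
    · subst hx0
      refine ⟨0, psi_zero C hC w, ?_, by simp, by simp⟩
      intro h; rw [← h] at hv; simp at hv
    have hn : 0 < ‖x‖ := norm_pos_iff.2 hx0
    obtain ⟨a, P, hg, hP0, hP, ha, ha4, h1⟩ := psi_deriv C hC w x hx0
    refine ⟨_, hg, ?_, ?_⟩
    · intro h; subst h
      have hpp : pp (‖x‖^2) = 0 := by simp [pp, hv]
      rw [hpp] at hP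
      have : P = 0 := by linarith
      rw [h1 hvw hv, this, hv, hvw]; simp
    set t := (‖x‖)⁻¹ • w - (⟪w, x⟫ * (‖x‖^3)⁻¹) • x with ht
    have htx : ⟪t, x⟫ = 0 := by
      rw [ht, inner_sub_left, inner_smul_left, inner_smul_left, real_inner_self_eq_norm_sq]
      simp; field_simp; ring
    have htn : ‖t‖^2 * ‖x‖^2 ≤ ‖w‖^2 := by
      have e : ⟪t, w⟫ = ‖x‖ * ‖t‖^2 := by
        have : w = ‖x‖ • t + (⟪w, x⟫ * (‖x‖^2)⁻¹) • x := by
          rw [ht, smul_sub, smul_smul, smul_smul, mul_inv_cancel₀ hn.ne', one_smul]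
          have : ‖x‖ * (⟪w, x⟫ * (‖x‖^3)⁻¹) = ⟪w, x⟫ * (‖x‖^2)⁻¹ := by field_simp
          rw [this]; simp
        conv_lhs => rw [this]
        rw [inner_add_right, inner_smul_right, inner_smul_right, htx, real_inner_self_eq_norm_sq]; ring
      have h2 := real_inner_le_norm t w
      rw [e] at h2
      rcases (norm_nonneg t).eq_or_lt with h | h
      · rw [← h]; simp
      · have : ‖x‖ * ‖t‖ ≤ ‖w‖ := by nlinarith
        have := pow_le_pow_left₀ (by positivity) this 2
        linarith [mul_pow ‖x‖ ‖t‖ 2, mul_comm (‖x‖^2) (‖t‖^2)]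
    have hin : ⟪a • t + (2 * P) • x, x⟫ = 2 * P * ‖x‖^2 := by
      rw [inner_add_left, inner_smul_left, inner_smul_left, htx, real_inner_self_eq_norm_sq]; simp
    have hns : ‖a • t + (2 * P) • x‖^2 = a^2 * ‖t‖^2 + 4 * P^2 * ‖x‖^2 := by
      rw [norm_add_sq_real, inner_smul_left, inner_smul_right, htx, norm_smul, norm_smul, mul_pow, mul_pow]
      simp only [Real.norm_eq_abs, sq_abs, conj_trivial]; ring
    rw [hin, hns]
    refine ⟨by positivity, ?_⟩
    have hR : 0 < ‖x‖^2 := by positivity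
    set R := ‖x‖^2 with hRd
    set T := ‖t‖^2
    have hT : 0 ≤ T := by positivity
    set K := ‖w‖^2
    have hK : 0 < K := by positivity
    suffices h : a^2 * T + 4 * P^2 * R + 4 * μ * P * R ≤ K * R by
      have h5 := mul_le_mul_of_nonneg_right hwL hR.le
      linarith
    rcases le_total ‖x‖ 1 with hx1 | hx1
    · have hR1 : R ≤ 1 := by nlinarith
      have hpp : pp R = 1 - R := max_eq_left (by linarith)
      rw [hpp] at hP
      have ha2 : a^2 ≤ R^4 := by
        have := pow_le_pow_left₀ (abs_nonneg a) (ha4 hx1) 2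
        rw [sq_abs] at this
        calc a^2 ≤ _ := this
          _ = R^4 := by rw [hRd]; ring
      have e1 : a^2 * T ≤ K * R^3 := by
        calc a^2 * T ≤ R^4 * T := by gcongr
          _ = R^3 * (T * R) := by ring
          _ ≤ R^3 * K := by gcongr
          _ = _ := by ring
      have e2 : 4 * P^2 + 4 * μ * P ≤ K * (1 - R) := by
        have f1 : 0 ≤ 1 - R := by linarith
        calc 4 * P^2 + 4 * μ * P ≤ 4 * (4 / C * (1 - R))^2 + 4 * μ * (4 / C * (1 - R)) := by gcongr
          _ = (64 / C^2 * (1 - R) + 16 * μ / C) * (1 - R) := by field_simp; ring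
          _ ≤ (64 / C^2 * 1 + 16 * μ / C) * (1 - R) := by gcongr; linarith
          _ ≤ K * (1 - R) := by gcongr; linarith
      have e3 : (4 * P^2 + 4 * μ * P) * R ≤ K * (1 - R) * R := by gcongr
      have e4 : K * R^3 ≤ K * R^2 := by gcongr K * ?_; nlinarith [mul_nonneg (sq_nonneg R) (sub_nonneg.2 hR1)]
      linarith
    · have hR1 : 1 ≤ R := by nlinarith
      have hpp : pp R = 0 := max_eq_right (by linarith)
      rw [hpp] at hP
      have hP' : P = 0 := by linarith
      have ha2 : a^2 ≤ 1 := by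
        have := pow_le_pow_left₀ (abs_nonneg a) ha 2
        rw [sq_abs] at this; linarith
      rw [hP']
      have : a^2 * T ≤ 1 * T := by gcongr
      have g1 := mul_le_mul_of_nonneg_left hR1 hT
      have g2 := mul_le_mul_of_nonneg_left hR1 hK.le
      linarith
  choose G hG hGv hG0 hGL using key
  refine ⟨fun x => μ / 2 * ‖x‖^2 + psi C w x, fun x => μ • x + G x, ?_, by simp only [hGv v rfl], ?_⟩
  · intro x
    have h1 := (hG x).hasFDerivAt
    have dN : HasFDerivAt (fun x : EuclideanSpace ℝ (Fin d) => ‖x‖^2) (2 • innerSL ℝ x) x :=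
      (hasStrictFDerivAt_norm_sq x).hasFDerivAt
    rw [hasGradientAt_iff_hasFDerivAt]
    refine ((dN.const_mul (μ / 2)).add h1).congr_fderiv ?_
    ext y
    simp [inner_add_left, inner_smul_left]
    ring
  · intro x
    constructor
    · rw [inner_add_left, inner_smul_left, real_inner_self_eq_norm_sq]
      have := hG0 x
      simp; exact this
    · have hLp : 0 < L := hμ.trans hL
      apply (sq_le_sq₀ (norm_nonneg _) (by positivity)).1
      · rw [norm_add_sq_real, inner_smul_left, norm_smul, real_inner_comm]
        have := hGL x
        simp only [mul_pow, Real.norm_eq_abs, sq_abs, conj_trivial]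
        nlinarith

lemma strict_min (μ : ℝ) (hμ : 0 < μ) (f : EuclideanSpace ℝ (Fin d) → ℝ)
    (G : EuclideanSpace ℝ (Fin d) → EuclideanSpace ℝ (Fin d))
    (hG : ∀ x, HasGradientAt f (G x) x) (h : ∀ x, μ * ‖x‖^2 ≤ ⟪G x, x⟫)
    (x : EuclideanSpace ℝ (Fin d)) (hx : x ≠ 0) : f 0 < f x := by
  have hd : ∀ t : ℝ, HasDerivAt (fun t : ℝ => f (t • x)) ⟪G (t • x), x⟫ t := by
    intro t
    have h1 := (hG (t • x)).hasFDerivAt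
    have h2 : HasDerivAt (fun t : ℝ => t • x) x t := by simpa using (hasDerivAt_id t).smul_const x
    have := h1.comp_hasDerivAt t h2
    simpa [Function.comp_def] using this
  obtain ⟨c, hc, hc2⟩ := exists_hasDerivAt_eq_slope (fun t : ℝ => f (t • x)) _ one_pos
    (fun t _ => (hd t).continuousAt.continuousWithinAt) (fun t _ => hd t)
  simp at hc2
  have h3 := h (c • x)
  rw [inner_smul_right, norm_smul, hc2] at h3
  have hn : 0 < ‖x‖ := norm_pos_iff.2 hx
  have hcn : 0 < ‖c‖ := norm_pos_iff.2 hc.1.ne'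
  have : 0 < μ * (‖c‖ * ‖x‖)^2 := by positivity
  have h4 : 0 < c * (f x - f 0) := by linarith
  have := (mul_pos_iff_of_pos_left hc.1).1 h4
  linarith

end helpers

/-- Initialization of the resisting oracle: any point `x*` on the
sphere of center `c₀ = x₀ − α₀·g₀` and radius `√(α₀/μ − α₀²)·‖g₀‖` orthogonal to `g₀`
satisfies `‖x₀ − x*‖² = (α₀/μ)‖g₀‖²`, and there is a function of `RSI⁻(μ) ∩ EB⁺(L)`
minimized exactly at `x*` with gradient `g₀` and value `((μ+L)/(4μ))·α₀·‖g₀‖²` at `x₀`. -/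
theorem stmt_13 {d : ℕ} (hd : 1 ≤ d) (μ L : ℝ) (hμ : 0 < μ) (hL : μ < L)
    (α₀ : ℝ) (hα₀ : α₀ ∈ Set.Icc (μ / L ^ 2) (max (μ / L ^ 2) (1 / (2 * μ))))
    (x₀ g₀ : EuclideanSpace ℝ (Fin d)) (hg₀ : g₀ ≠ 0)
    (c₀ : EuclideanSpace ℝ (Fin d)) (hc₀ : c₀ = x₀ - α₀ • g₀)
    (xstar : EuclideanSpace ℝ (Fin d))
    (horth : ⟪xstar - c₀, g₀⟫ = 0)
    (hrad : ‖xstar - c₀‖ = Real.sqrt (α₀ / μ - α₀ ^ 2) * ‖g₀‖) :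
    ‖x₀ - xstar‖ ^ 2 = α₀ / μ * ‖g₀‖ ^ 2 ∧
    ∃ f : EuclideanSpace ℝ (Fin d) → ℝ, MemRSIEB μ L f ∧
      argminSet f = {xstar} ∧ gradient f x₀ = g₀ ∧
      f x₀ = (μ + L) / (4 * μ) * α₀ * ‖g₀‖ ^ 2 := by
  have hL0 : 0 < L := hμ.trans hL
  have hα : 0 < α₀ := lt_of_lt_of_le (by positivity) hα₀.1
  have hαμ : α₀ * μ < 1 := by
    have h1 : max (μ / L ^ 2) (1 / (2 * μ)) < 1 / μ := by
      apply max_lt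
      · rw [div_lt_div_iff₀ (by positivity) hμ]; nlinarith
      · rw [div_lt_div_iff₀ (by positivity) hμ]; nlinarith
    have h2 := lt_of_le_of_lt hα₀.2 h1
    rwa [lt_div_iff₀ hμ] at h2
  have hαL : μ ≤ α₀ * L^2 := by
    have := hα₀.1
    rwa [div_le_iff₀ (by positivity)] at this
  have hgn : 0 < ‖g₀‖ := norm_pos_iff.2 hg₀
  have hrt : 0 ≤ α₀ / μ - α₀ ^ 2 := by
    rw [sub_nonneg, le_div_iff₀ hμ]; nlinarith
  have hrad2 : ‖xstar - c₀‖^2 = (α₀ / μ - α₀^2) * ‖g₀‖^2 := by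
    rw [hrad, mul_pow, Real.sq_sqrt hrt]
  have hv0 : x₀ - xstar = α₀ • g₀ - (xstar - c₀) := by rw [hc₀]; abel
  have hnorm : ‖x₀ - xstar‖ ^ 2 = α₀ / μ * ‖g₀‖ ^ 2 := by
    rw [hv0, norm_sub_sq_real, inner_smul_left, real_inner_comm, horth, hrad2, norm_smul, mul_pow]
    simp
    ring
  have hinn : ⟪x₀ - xstar, g₀⟫ = α₀ * ‖g₀‖^2 := by
    rw [hv0, inner_sub_left, horth, inner_smul_left, real_inner_self_eq_norm_sq]; simp
  refine ⟨hnorm, ?_⟩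
  set ρ := ‖x₀ - xstar‖ with hρd
  have hρ2 : 0 < ρ^2 := by rw [hnorm]; positivity
  have hρ : 0 < ρ := lt_of_le_of_ne (norm_nonneg _) (fun h => by rw [← h] at hρ2; simp at hρ2)
  have hρm : μ * ρ^2 = α₀ * ‖g₀‖^2 := by rw [hnorm]; field_simp
  set v := ρ⁻¹ • (x₀ - xstar) with hvd
  set w := ρ⁻¹ • g₀ - μ • v with hwd
  have hv : ‖v‖ = 1 := by
    rw [hvd, norm_smul, ← hρd, norm_inv, Real.norm_of_nonneg hρ.le]; field_simp
  have hgv : ⟪ρ⁻¹ • g₀, v⟫ = μ := by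
    rw [hvd, inner_smul_left, inner_smul_right, real_inner_comm, hinn, ← hρm]
    simp; field_simp
  have hvw : ⟪w, v⟫ = 0 := by
    rw [hwd, inner_sub_left, hgv, inner_smul_left, real_inner_self_eq_norm_sq, hv]; simp
  have hw2 : ‖w‖^2 = μ / α₀ - μ^2 := by
    rw [hwd, norm_sub_sq_real, inner_smul_right, hgv, norm_smul, norm_smul, hv, mul_pow, norm_inv,
      Real.norm_of_nonneg hρ.le, Real.norm_of_nonneg hμ.le, inv_pow, hnorm]
    field_simp
    ring
  have hwpos : 0 < ‖w‖ := by
    have : 0 < ‖w‖^2 := by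
      rw [hw2, sub_pos, lt_div_iff₀ hα]; nlinarith
    exact lt_of_le_of_ne (norm_nonneg _) (fun h => by rw [← h] at this; simp at this)
  have hwL : ‖w‖^2 ≤ L^2 - μ^2 := by
    rw [hw2]
    have : μ / α₀ ≤ L^2 := by rw [div_le_iff₀ hα]; linarith
    linarith
  obtain ⟨f1, G, hG, hGv, hGb⟩ := core μ L hμ hL v w hv hvw hwpos hwL
  set c : ℝ := (μ + L) / (4 * μ) * α₀ * ‖g₀‖ ^ 2 - ρ^2 * f1 v with hc
  set f : EuclideanSpace ℝ (Fin d) → ℝ := fun x => ρ^2 * f1 (ρ⁻¹ • (x - xstar)) + c with hf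
  have hgrad : ∀ x, HasGradientAt f (ρ • G (ρ⁻¹ • (x - xstar))) x := by
    intro x
    have h1 := (hG (ρ⁻¹ • (x - xstar))).hasFDerivAt
    have h2 : HasFDerivAt (fun x : EuclideanSpace ℝ (Fin d) => ρ⁻¹ • (x - xstar))
        (ρ⁻¹ • ContinuousLinearMap.id ℝ _) x := ((hasFDerivAt_id x).sub_const xstar).const_smul ρ⁻¹
    have h3 := ((h1.comp x h2).const_mul (ρ^2)).add_const c
    rw [hasGradientAt_iff_hasFDerivAt]
    refine h3.congr_fderiv ?_
    ext y
    simp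
    field_simp
  have hmin : argminSet f = {xstar} := by
    have hstrict : ∀ x, x ≠ xstar → f xstar < f x := by
      intro x hx
      have h1 := strict_min μ hμ f1 G hG (fun x => (hGb x).1) (ρ⁻¹ • (x - xstar))
        (smul_ne_zero (by positivity) (sub_ne_zero.2 hx))
      simp only [hf, sub_self, smul_zero]
      gcongr
    ext z
    simp only [argminSet, Set.mem_setOf_eq, Set.mem_singleton_iff]
    constructor
    · intro h
      by_contra hz
      exact absurd (h xstar) (not_le.2 (hstrict z hz))
    · rintro rfl y
      by_cases hy : y = z
      · rw [hy]
      · exact (hstrict y hy).le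
  have hsc : ∀ x, ‖x - xstar‖ = ρ * ‖ρ⁻¹ • (x - xstar)‖ := by
    intro x
    rw [norm_smul, norm_inv, Real.norm_of_nonneg hρ.le]; field_simp
  refine ⟨f, ⟨fun x => (hgrad x).hasFDerivAt.differentiableAt, ?_, ?_, ?_, fun _ => xstar, ?_, ?_, ?_⟩,
    hmin, ?_, ?_⟩
  · rw [hmin]; exact Set.singleton_nonempty _
  · rw [hmin]; exact isClosed_singleton
  · rw [hmin]; exact convex_singleton _
  · rw [hmin]; intro x; simp
  · intro x
    rw [(hgrad x).gradient]
    have h1 := (hGb (ρ⁻¹ • (x - xstar))).1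
    rw [inner_smul_right] at h1
    rw [inner_smul_left, hsc x]
    have h2 := mul_le_mul_of_nonneg_left h1 hρ2.le
    have h3 : ∀ t : ℝ, ρ^2 * (ρ⁻¹ * t) = ρ * t := by intro t; field_simp
    rw [h3] at h2
    simp only [conj_trivial]
    linarith [mul_pow ρ ‖ρ⁻¹ • (x - xstar)‖ 2, h2, congrArg (μ * ·) (mul_pow ρ ‖ρ⁻¹ • (x - xstar)‖ 2)]
  · intro x
    rw [(hgrad x).gradient, norm_smul, Real.norm_of_nonneg hρ.le, hsc x]
    have h1 := mul_le_mul_of_nonneg_left (hGb (ρ⁻¹ • (x - xstar))).2 hρ.le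
    linarith
  · rw [(hgrad x₀).gradient, ← hvd, hGv, hwd, add_sub_cancel, smul_smul, mul_inv_cancel₀ hρ.ne', one_smul]
  · simp only [hf, hc, ← hvd]; ring
end
end

section
/- Geometric step lemma for the resisting oracle: let d ≥ 1, let 0 < μ < L, r > 0, and let x, c, x* ∈ ℝ^d with x ≠ c such that ⟨x − c, c − x*⟩ = 0, ‖c − x*‖² = (1 − μ²/L²)·r², and ‖x − c‖ ≥ (μ/L)·r. Define g = (L·‖x − x*‖ / ‖x − c‖)·(x − c). Then ‖g‖ = L·‖x − x*‖ and ⟨g, x − x*⟩ ≥ μ·‖x − x*‖². -/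
open RealInnerProductSpace

/-- Geometric step lemma for the resisting oracle: under the stated
orthogonality and radius conditions, the vector
`g = (L·‖x − x*‖/‖x − c‖)·(x − c)` satisfies `‖g‖ = L‖x − x*‖` and
`⟪g, x − x*⟫ ≥ μ‖x − x*‖²`. -/
theorem stmt_14 {d : ℕ} (hd : 1 ≤ d) (μ L r : ℝ) (hμ : 0 < μ) (hμL : μ < L)
    (hr : 0 < r)
    (x c xstar : EuclideanSpace ℝ (Fin d)) (hxc : x ≠ c)
    (horth : ⟪x - c, c - xstar⟫ = 0)
    (hrad : ‖c - xstar‖ ^ 2 = (1 - μ ^ 2 / L ^ 2) * r ^ 2)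
    (hdist : μ / L * r ≤ ‖x - c‖)
    (g : EuclideanSpace ℝ (Fin d))
    (hg : g = (L * ‖x - xstar‖ / ‖x - c‖) • (x - c)) :
    ‖g‖ = L * ‖x - xstar‖ ∧ μ * ‖x - xstar‖ ^ 2 ≤ ⟪g, x - xstar⟫ := by
  have hL : 0 < L := hμ.trans hμL
  have ha : 0 < ‖x - c‖ := norm_pos_iff.mpr (sub_ne_zero.mpr hxc)
  have hb : 0 ≤ ‖x - xstar‖ := norm_nonneg _
  have hsplit : x - xstar = (x - c) + (c - xstar) := by abel
  have hin : ⟪x - c, x - xstar⟫ = ‖x - c‖ ^ 2 := by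
    rw [hsplit, inner_add_right, horth, real_inner_self_eq_norm_sq, add_zero]
  have hpy : ‖x - xstar‖ ^ 2 = ‖x - c‖ ^ 2 + ‖c - xstar‖ ^ 2 := by
    rw [hsplit, norm_add_sq_real, horth]; ring
  constructor
  · rw [hg, norm_smul, Real.norm_of_nonneg (by positivity)]
    field_simp
  · rw [hg, real_inner_smul_left, hin]
    have hq0 : 0 < μ / L := by positivity
    have hq1 : μ / L < 1 := (div_lt_one hL).mpr hμL
    have hμq : μ = μ / L * L := by field_simp
    rw [← div_pow] at hrad
    generalize μ / L = q at *
    have h1 : (q * r) ^ 2 ≤ ‖x - c‖ ^ 2 := by gcongr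
    have h2 : (q * ‖x - xstar‖) ^ 2 ≤ ‖x - c‖ ^ 2 := by
      rw [mul_pow, hpy, hrad]
      have h3 : 0 ≤ 1 - q ^ 2 := by nlinarith
      nlinarith [mul_le_mul_of_nonneg_left h1 h3]
    have h4 : q * ‖x - xstar‖ ≤ ‖x - c‖ := (sq_le_sq₀ (by positivity) ha.le).mp h2
    have h5 : L * ‖x - xstar‖ / ‖x - c‖ * ‖x - c‖ ^ 2 = L * ‖x - xstar‖ * ‖x - c‖ := by
      field_simp
    rw [h5, hμq]
    calc q * L * ‖x - xstar‖ ^ 2 = L * ‖x - xstar‖ * (q * ‖x - xstar‖) := by ring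
      _ ≤ _ := by gcongr
end
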